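/- Prime Ideal Theorem: if K is a number field and π_K(x) denotes the number of nonzero prime ideals 𝔭 of the ring of integers O_K with norm N(𝔭) ≤ x, then π_K(x) ∼ Li(x) as x → ∞; that is, π_K(x)/Li(x) tends to 1. -/

import Mathlib

open Filter

/-
The nonzero ideals in an ideal class correspond to the elements of a fractional ideal modulo units.
Instead of cutting out a fundamental domain for the units, one weights each element by a Lipschitz
function whose translates under the units sum to one, so that a smoothed count of ideals becomes a
sum of a compactly supported Lipschitz function over a lattice. Comparing this sum with an integral
saves a power of the scale. The Mellin transform of the smoothed count is `ζ_K(s)` times that of the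
smoothing kernel, which has no zeros for `re s > 0`, so `(s - 1) ζ_K(s)` continues analytically
beyond the line `re s = 1`. The inequality `3 + 4 cos θ + cos 2θ ≥ 0` excludes zeros on that line,
and the Wiener-Ikehara theorem, obtained from the Fejér kernel and the Riemann-Lebesgue lemma, gives
`ϑ_K(x) ∼ x`, from which `π_K(x) ∼ x / log x ∼ Li(x)`.
-/

namespace PrimeIdealTheorem

open MeasureTheory Set Topology

section TentFunction

/-- The tent function: a Lipschitz cutoff whose integer translates form a partition of unity and
whose Fourier transform, the Fejér kernel, is nonnegative. -/
noncomputable def tent (t : ℝ) : ℝ := max 0 (1 - |t|)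

lemma tent_nonneg (t : ℝ) : 0 ≤ tent t := le_max_left _ _

lemma tent_le_one (t : ℝ) : tent t ≤ 1 := max_le zero_le_one (by linarith [abs_nonneg t])

lemma tent_of_abs_le_one {t : ℝ} (ht : |t| ≤ 1) : tent t = 1 - |t| := max_eq_right (by linarith)

lemma tent_of_one_le_abs {t : ℝ} (ht : 1 ≤ |t|) : tent t = 0 := max_eq_left (by linarith)

lemma lipschitzWith_tent : LipschitzWith 1 tent := by
  refine LipschitzWith.of_dist_le_mul fun s t => ?_
  rw [NNReal.coe_one, one_mul, Real.dist_eq, Real.dist_eq, tent, tent, max_comm, max_comm 0]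
  calc |max (1 - |s|) 0 - max (1 - |t|) 0| ≤ |1 - |s| - (1 - |t|)| := abs_max_sub_max_le_abs _ _ _
    _ = |(|t| - |s|)| := by rw [sub_sub_sub_cancel_left]
    _ ≤ |t - s| := abs_abs_sub_abs_le_abs_sub _ _
    _ = |s - t| := abs_sub_comm _ _

@[fun_prop]
lemma continuous_tent : Continuous tent := lipschitzWith_tent.continuous

lemma support_tent_subset : Function.support tent ⊆ Ioo (-1) 1 := fun _ ht =>
  abs_lt.mp (not_le.mp fun h => ht (tent_of_one_le_abs h))

lemma integrable_tent : Integrable tent :=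
  continuous_tent.integrable_of_hasCompactSupport <|
    .of_support_subset_isCompact isCompact_Icc (support_tent_subset.trans Ioo_subset_Icc_self)

lemma integrable_tent_div {l : ℝ} (hl : l ≠ 0) : Integrable fun t => tent (t / l) :=
  integrable_tent.comp_div hl

lemma integral_tent_mul_eq_interval {f : ℝ → ℂ} (hf : Continuous f) :
    ∫ t : ℝ, tent t * f t = ∫ t in (0 : ℝ)..1, (1 - t) * (f t + f (-t)) := by
  have hcont : Continuous fun t : ℝ => (tent t : ℂ) * f t := by fun_prop
  have hneg : ∫ t in (-1 : ℝ)..0, tent t * f t = ∫ t in (0 : ℝ)..1, tent (-t) * f (-t) := by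
    rw [intervalIntegral.integral_comp_neg fun t : ℝ => (tent t : ℂ) * f t, neg_zero]
  have hsupp : Function.support (fun t : ℝ => (tent t : ℂ) * f t) ⊆ Ioc (-1) 1 := fun t ht =>
    Ioo_subset_Ioc_self <| support_tent_subset fun h => ht (by simp [h])
  rw [← intervalIntegral.integral_eq_integral_of_support_subset hsupp,
    ← intervalIntegral.integral_add_adjacent_intervals (b := 0) (hcont.intervalIntegrable _ _)
      (hcont.intervalIntegrable _ _), hneg,
    ← intervalIntegral.integral_add (Continuous.intervalIntegrable (by fun_prop) _ _)
      (hcont.intervalIntegrable _ _)]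
  refine intervalIntegral.integral_congr fun t ht => ?_
  rw [uIcc_of_le zero_le_one] at ht
  have habs : |t| = t := abs_of_nonneg ht.1
  simp only [tent_of_abs_le_one (habs.trans_le ht.2),
    tent_of_abs_le_one ((abs_neg t).trans_le (habs.trans_le ht.2)), abs_neg, habs]
  push_cast
  ring

lemma integral_tent_mul_cexp {a : ℂ} (ha : a ≠ 0) :
    ∫ t : ℝ, (tent t : ℂ) * Complex.exp (a * t) =
      (Complex.exp a + Complex.exp (-a) - 2) / a ^ 2 := by
  rw [integral_tent_mul_eq_interval (by fun_prop), intervalIntegral.integral_eq_sub_of_hasDerivAt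
    (f := fun t : ℝ => (1 - t) * (Complex.exp (a * t) - Complex.exp (-a * t)) / a +
      (Complex.exp (a * t) + Complex.exp (-a * t)) / a ^ 2)]
  · simp only [Complex.ofReal_one, Complex.ofReal_zero, mul_one, mul_zero, sub_self,
      zero_mul, zero_div, Complex.exp_zero]
    ring
  · intro t _
    have hid : HasDerivAt (fun t : ℝ => (t : ℂ)) 1 t := Complex.ofRealCLM.hasDerivAt
    have hexp := (hid.const_mul a).cexp
    have hexp' := (hid.const_mul (-a)).cexp
    convert! (((hid.const_sub 1).mul (hexp.sub hexp')).div_const a).add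
      ((hexp.add hexp').div_const (a ^ 2)) using 1
    simp only [Pi.sub_apply, Complex.ofReal_neg, mul_neg, neg_mul]
    field_simp
    ring
  · exact Continuous.intervalIntegrable (by fun_prop) _ _

end TentFunction

section FejerKernel

/-- The Fejér kernel, the Fourier transform of the tent function away from `0`. Its value at `0` is
the junk value `0`, which does not matter for integration. -/
noncomputable def fejer (x : ℝ) : ℝ := 2 * (1 - Real.cos x) / x ^ 2

lemma fejer_nonneg (x : ℝ) : 0 ≤ fejer x :=
  div_nonneg (by linarith [Real.cos_le_one x]) (sq_nonneg x)

@[fun_prop]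
lemma measurable_fejer : Measurable fejer := by unfold fejer; fun_prop

lemma fejer_le (x : ℝ) : fejer x ≤ 8 * (1 + x ^ 2)⁻¹ := by
  rcases eq_or_ne x 0 with rfl | hx
  · simp [fejer]
  have hx2 : 0 < x ^ 2 := by positivity
  rw [fejer, div_le_iff₀ hx2, ← div_eq_mul_inv, div_mul_eq_mul_div, le_div_iff₀ (by positivity)]
  nlinarith [Real.one_sub_sq_div_two_le_cos (x := x), Real.neg_one_le_cos x]

lemma integrable_fejer : Integrable fejer :=
  (integrable_inv_one_add_sq.const_mul 8).mono' measurable_fejer.aestronglyMeasurable <|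
    .of_forall fun x => (Real.norm_of_nonneg (fejer_nonneg x)).trans_le (fejer_le x)

lemma integral_fejer_pos : 0 < ∫ x, fejer x := by
  rw [integral_pos_iff_support_of_nonneg fejer_nonneg integrable_fejer]
  have hsub : Ioo (0 : ℝ) 1 ⊆ Function.support fejer := fun x hx => by
    have hcos : Real.cos x < Real.cos 0 := Real.cos_lt_cos_of_nonneg_of_le_pi le_rfl
      (by linarith [Real.pi_gt_three, hx.2]) hx.1
    rw [Real.cos_zero] at hcos
    exact (div_pos (by linarith) (pow_pos hx.1 2)).ne'
  exact lt_of_lt_of_le (by simp) (measure_mono hsub)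

lemma integral_tent_mul_cexp_eq_fejer {x : ℝ} (hx : x ≠ 0) :
    ∫ t : ℝ, (tent t : ℂ) * Complex.exp (t * x * Complex.I) = fejer x := by
  have hcos : Complex.exp (x * Complex.I) + Complex.exp (-(x * Complex.I)) = 2 * Complex.cos x := by
    rw [Complex.cos]; ring_nf
  have hx' : (x : ℂ) ≠ 0 := by exact_mod_cast hx
  calc ∫ t : ℝ, (tent t : ℂ) * Complex.exp (t * x * Complex.I)
      = ∫ t : ℝ, (tent t : ℂ) * Complex.exp (x * Complex.I * t) := by congr with t; ring_nf
    _ = (2 * Complex.cos x - 2) / (x * Complex.I) ^ 2 := by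
        rw [integral_tent_mul_cexp (by simp [hx]), hcos]
    _ = fejer x := by
        rw [fejer, mul_pow, Complex.I_sq]
        push_cast
        field_simp
        ring

lemma integral_tent_div_mul_cexp {l x : ℝ} (hl : 0 < l) (hx : x ≠ 0) :
    ∫ t : ℝ, (tent (t / l) : ℂ) * Complex.exp (t * x * Complex.I) =
      ((l * fejer (l * x) : ℝ) : ℂ) := by
  have hscale := Measure.integral_comp_mul_left
    (fun t : ℝ => (tent (t / l) : ℂ) * Complex.exp (t * x * Complex.I)) l
  rw [abs_of_pos (inv_pos.mpr hl), eq_inv_smul_iff₀ hl.ne', Complex.real_smul] at hscale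
  rw [← hscale, Complex.ofReal_mul, ← integral_tent_mul_cexp_eq_fejer (by positivity)]
  congr with t
  rw [mul_div_cancel_left₀ _ hl.ne']
  push_cast
  ring_nf

lemma integrable_fejer_comp {l : ℝ} (hl : l ≠ 0) (u : ℝ) :
    Integrable fun v => l * fejer (l * (u - v)) :=
  ((integrable_fejer.comp_mul_left' hl).comp_sub_left u).const_mul l

lemma setIntegral_fejer_comp (l u : ℝ) {a b : ℝ} (hab : a ≤ b) :
    ∫ v in Icc a b, l * fejer (l * (u - v)) =
      ∫ x in (l * (u - b))..(l * (u - a)), fejer x := by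
  rw [integral_Icc_eq_integral_Ioc, ← intervalIntegral.integral_of_le hab,
    intervalIntegral.integral_comp_sub_left (fun v => l * fejer (l * v)),
    intervalIntegral.integral_const_mul, intervalIntegral.mul_integral_comp_mul_left]

lemma integral_fejer_mul_left {l : ℝ} (hl : 0 < l) :
    ∫ v, l * fejer (l * v) = ∫ x, fejer x := by
  rw [integral_const_mul, Measure.integral_comp_mul_left, abs_of_pos (inv_pos.mpr hl),
    smul_eq_mul, mul_inv_cancel_left₀ hl.ne']

/-- The average of `f` on the positive half-line around `u`, against the Fejér kernel at scale
`1 / l`. The kernel is not normalised: the total mass is `∫ x, fejer x`. -/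
noncomputable def fejerMean (f : ℝ → ℝ) (l u : ℝ) : ℝ :=
  ∫ v in Ioi 0, f v * (l * fejer (l * (u - v)))

variable {f : ℝ → ℝ} {C l : ℝ}

lemma integrable_mul_fejer (hf : Measurable f) (hC : ∀ v, |f v| ≤ C) (hl : l ≠ 0) (u : ℝ) :
    Integrable fun v => f v * (l * fejer (l * (u - v))) :=
  (integrable_fejer_comp hl u).bdd_mul hf.aestronglyMeasurable (.of_forall hC)

lemma tendsto_fejerMean_one (hl : 0 < l) :
    Tendsto (fejerMean (fun _ => 1) l) atTop (𝓝 (∫ x, fejer x)) := by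
  have hmean (u : ℝ) : fejerMean (fun _ => 1) l u = ∫ v in Iio u, l * fejer (l * v) := by
    simp_rw [fejerMean, one_mul]
    rw [← integral_indicator measurableSet_Ioi, ← integral_indicator measurableSet_Iio,
      ← integral_sub_left_eq_self _ volume u]
    congr with v
    simp [indicator_apply]
  rw [← integral_fejer_mul_left hl]
  exact ((aecover_Iio tendsto_id).integral_tendsto_of_countably_generated
    ((integrable_fejer.comp_mul_left' hl.ne').const_mul l)).congr fun u => (hmean u).symm

end FejerKernel

section WienerIkehara

variable {f : ℝ → ℝ} {H : ℂ → ℂ} {C l : ℝ}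

lemma fejerMean_damped_eq (hf : Measurable f) (hC : ∀ v, |f v| ≤ C) (hl : 0 < l) (u : ℝ)
    {ε : ℝ} (hε : 0 < ε) :
    ((fejerMean (fun v => f v * Real.exp (-(ε * v))) l u : ℝ) : ℂ) =
      ∫ t : ℝ, tent (t / l) * Complex.exp (t * u * Complex.I) *
        ∫ v in Ioi (0 : ℝ), f v * Complex.exp (-(ε + t * Complex.I) * v) := by
  have hexp : IntegrableOn (fun v => C * Real.exp (-(ε * v))) (Ioi 0) := by
    simpa only [neg_mul, IntegrableOn] using (exp_neg_integrableOn_Ioi 0 hε).const_mul C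
  have hint : Integrable (Function.uncurry fun t v : ℝ =>
      tent (t / l) * Complex.exp (t * u * Complex.I) *
        (f v * Complex.exp (-(ε + t * Complex.I) * v)))
      (volume.prod (volume.restrict (Ioi 0))) := by
    refine ((integrable_tent_div hl.ne').mul_prod hexp).mono'
      (by unfold Function.uncurry; fun_prop) (.of_forall fun ⟨t, v⟩ => ?_)
    simp only [Function.uncurry, norm_mul, Complex.norm_real, Complex.norm_exp,
      Real.norm_of_nonneg (tent_nonneg _)]
    simpa using mul_le_mul_of_nonneg_left
      (mul_le_mul_of_nonneg_right (hC v) (Real.exp_nonneg _)) (tent_nonneg (t / l))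
  simp_rw [← integral_const_mul]
  rw [integral_integral_swap hint, fejerMean, ← integral_complex_ofReal]
  refine integral_congr_ae (ae_restrict_of_ae ?_)
  filter_upwards [Measure.ae_ne volume u] with v hv
  rw [Complex.ofReal_mul, ← integral_tent_div_mul_cexp hl (sub_ne_zero.mpr hv.symm),
    ← integral_const_mul]
  congr with t
  have hphase : Complex.exp (t * u * Complex.I) * Complex.exp (-(ε + t * Complex.I) * v) =
      Complex.exp (-(ε * v)) * Complex.exp (t * (u - v) * Complex.I) := by
    rw [← Complex.exp_add, ← Complex.exp_add]
    ring_nf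
  push_cast
  linear_combination -(tent (t / l) : ℂ) * f v * hphase

lemma tendsto_fejerMean_damped (hf : Measurable f) (hC : ∀ v, |f v| ≤ C) (hl : 0 < l) (u : ℝ) :
    Tendsto (fun ε => fejerMean (fun v => f v * Real.exp (-(ε * v))) l u) (𝓝[>] 0)
      (𝓝 (fejerMean f l u)) := by
  refine tendsto_integral_filter_of_dominated_convergence
    (fun v => C * (l * fejer (l * (u - v)))) (.of_forall fun ε => by fun_prop) ?_
    ((integrable_fejer_comp hl.ne' u).const_mul C).integrableOn (.of_forall fun v => ?_)
  · filter_upwards [self_mem_nhdsWithin] with ε hε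
    filter_upwards [ae_restrict_mem measurableSet_Ioi] with v hv
    have hexp : Real.exp (-(ε * v)) ≤ 1 :=
      Real.exp_le_one_iff.mpr (neg_nonpos.mpr (mul_pos hε hv).le)
    rw [norm_mul, norm_mul, Real.norm_of_nonneg (Real.exp_nonneg _),
      Real.norm_of_nonneg (mul_nonneg hl.le (fejer_nonneg _))]
    exact mul_le_mul_of_nonneg_right ((mul_le_of_le_one_right (abs_nonneg _) hexp).trans (hC v))
      (mul_nonneg hl.le (fejer_nonneg _))
  · have hcont : Continuous fun ε => f v * Real.exp (-(ε * v)) * (l * fejer (l * (u - v))) := by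
      fun_prop
    simpa using (hcont.tendsto 0).mono_left nhdsWithin_le_nhds

lemma exists_norm_le_of_continuousOn_halfPlane (hH : ContinuousOn H {s | 0 ≤ s.re}) (l : ℝ) :
    ∃ M, ∀ ε ∈ Icc (0 : ℝ) 1, ∀ t ∈ Icc (-l) l, ‖H (ε + t * Complex.I)‖ ≤ M := by
  have hcomp : ContinuousOn (fun p : ℝ × ℝ => H (p.1 + p.2 * Complex.I))
      (Icc (0 : ℝ) 1 ×ˢ Icc (-l) l) :=
    hH.comp (by fun_prop) fun p hp => by simpa using hp.1.1
  obtain ⟨M, hM⟩ := (isCompact_Icc.prod isCompact_Icc).exists_bound_of_continuousOn hcomp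
  exact ⟨M, fun ε hε t ht => hM (ε, t) ⟨hε, ht⟩⟩

lemma continuous_comp_verticalLine (hH : ContinuousOn H {s | 0 ≤ s.re}) {ε : ℝ} (hε : 0 ≤ ε) :
    Continuous fun t : ℝ => H (ε + t * Complex.I) :=
  hH.comp_continuous (by fun_prop) fun t => by simpa using hε

lemma tendsto_integral_tent_mul (hH : ContinuousOn H {s | 0 ≤ s.re}) (hl : 0 < l) (u : ℝ) :
    Tendsto (fun ε : ℝ => ∫ t : ℝ, tent (t / l) * Complex.exp (t * u * Complex.I) *
        H (ε + t * Complex.I)) (𝓝[>] 0)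
      (𝓝 (∫ t : ℝ, tent (t / l) * Complex.exp (t * u * Complex.I) * H (t * Complex.I))) := by
  obtain ⟨M, hM⟩ := exists_norm_le_of_continuousOn_halfPlane hH l
  refine tendsto_integral_filter_of_dominated_convergence (fun t => tent (t / l) * M) ?_ ?_
    ((integrable_tent_div hl.ne').mul_const M) (.of_forall fun t => Tendsto.const_mul _ ?_)
  · filter_upwards [self_mem_nhdsWithin] with ε hε
    exact (Continuous.mul (by fun_prop)
      (continuous_comp_verticalLine hH (le_of_lt hε))).aestronglyMeasurable
  · filter_upwards [Ioo_mem_nhdsGT one_pos] with ε hε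
    refine .of_forall fun t => ?_
    rw [norm_mul, norm_mul, Complex.norm_real, Real.norm_of_nonneg (tent_nonneg _),
      ← Complex.ofReal_mul, Complex.norm_exp_ofReal_mul_I, mul_one]
    by_cases ht : t ∈ Icc (-l) l
    · exact mul_le_mul_of_nonneg_left (hM ε (Ioo_subset_Icc_self hε) t ht) (tent_nonneg _)
    · have htent : tent (t / l) = 0 := tent_of_one_le_abs <| by
        rw [abs_div, abs_of_pos hl, one_le_div hl]
        exact (not_le.mp fun h => ht (abs_le.mp h)).le
      simp [htent]
  · have hlim : Tendsto (fun ε : ℝ => (ε : ℂ) + t * Complex.I) (𝓝[>] 0)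
        (𝓝[{s | 0 ≤ s.re}] (t * Complex.I)) := by
      refine tendsto_nhdsWithin_iff.mpr ⟨?_, ?_⟩
      · have hcont : Continuous fun ε : ℝ => (ε : ℂ) + t * Complex.I := by fun_prop
        simpa using (hcont.tendsto 0).mono_left nhdsWithin_le_nhds
      · filter_upwards [self_mem_nhdsWithin] with ε hε
        simpa using le_of_lt hε
    exact (hH (t * Complex.I) (by simp)).tendsto.comp hlim

/-- Letting the damping tend to `0` uses only continuity of the Laplace transform up to the
imaginary axis. -/
lemma fejerMean_eq_integral_boundary (hf : Measurable f) (hC : ∀ v, |f v| ≤ C)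
    (hH : ContinuousOn H {s | 0 ≤ s.re})
    (hfH : ∀ s : ℂ, 0 < s.re → ∫ v in Ioi (0 : ℝ), f v * Complex.exp (-s * v) = H s)
    (hl : 0 < l) (u : ℝ) :
    (fejerMean f l u : ℂ) =
      ∫ t : ℝ, tent (t / l) * Complex.exp (t * u * Complex.I) * H (t * Complex.I) := by
  refine tendsto_nhds_unique
    ((Complex.continuous_ofReal.tendsto _).comp (tendsto_fejerMean_damped hf hC hl u))
    ((tendsto_integral_tent_mul hH hl u).congr' ?_)
  filter_upwards [self_mem_nhdsWithin] with ε hε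
  refine Eq.trans ?_ (fejerMean_damped_eq hf hC hl u hε).symm
  congr with t
  rw [hfH _ (by simpa using hε)]

/-- The boundary integral is a Fourier transform, so the Riemann-Lebesgue lemma applies. -/
lemma tendsto_fejerMean_zero (hf : Measurable f) (hC : ∀ v, |f v| ≤ C)
    (hH : ContinuousOn H {s | 0 ≤ s.re})
    (hfH : ∀ s : ℂ, 0 < s.re → ∫ v in Ioi (0 : ℝ), f v * Complex.exp (-s * v) = H s)
    (hl : 0 < l) :
    Tendsto (fejerMean f l) atTop (𝓝 0) := by
  have hfreq : Tendsto (fun u : ℝ => -u / (2 * Real.pi)) atTop (cocompact ℝ) :=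
    (tendsto_neg_atTop_atBot.atBot_div_const (by positivity)).mono_right atBot_le_cocompact
  have hRL := (Real.tendsto_integral_exp_smul_cocompact
    fun t : ℝ => (tent (t / l) : ℂ) * H (t * Complex.I)).comp hfreq
  suffices hlim : Tendsto (fun u => (fejerMean f l u : ℂ)) atTop (𝓝 0) by
    simpa [Function.comp_def] using (Complex.continuous_re.tendsto _).comp hlim
  refine hRL.congr fun u => ?_
  rw [fejerMean_eq_integral_boundary hf hC hH hfH hl]
  refine integral_congr_ae (.of_forall fun t => ?_)
  have harg : 2 * Real.pi * -(t * (-u / (2 * Real.pi))) = t * u := by field_simp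
  simp only [Circle.smul_def, Real.fourierChar_apply, smul_eq_mul, harg]
  push_cast
  ring

lemma fejerMean_sub {g : ℝ → ℝ} {D : ℝ} (hf : Measurable f) (hC : ∀ v, |f v| ≤ C)
    (hg : Measurable g) (hD : ∀ v, |g v| ≤ D) (hl : l ≠ 0) (u : ℝ) :
    fejerMean (fun v => f v - g v) l u = fejerMean f l u - fejerMean g l u := by
  simp_rw [fejerMean, sub_mul]
  exact integral_sub (integrable_mul_fejer hf hC hl u).integrableOn
    (integrable_mul_fejer hg hD hl u).integrableOn

lemma fejerMean_const (C l u : ℝ) :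
    fejerMean (fun _ => C) l u = C * fejerMean (fun _ => 1) l u := by
  simp_rw [fejerMean, one_mul]
  exact integral_const_mul _ _

lemma mul_window_le_fejerMean (hf : Measurable f) (hC : ∀ v, |f v| ≤ C) (hf0 : ∀ v, 0 ≤ f v)
    (hl : 0 < l) {a b c : ℝ} (ha : 0 < a) (hab : a ≤ b) (hc : ∀ v ∈ Icc a b, c ≤ f v) (u : ℝ) :
    c * ∫ x in (l * (u - b))..(l * (u - a)), fejer x ≤ fejerMean f l u := by
  have hK (v : ℝ) : 0 ≤ l * fejer (l * (u - v)) := mul_nonneg hl.le (fejer_nonneg _)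
  have hint := integrable_mul_fejer hf hC hl.ne' u
  calc c * ∫ x in (l * (u - b))..(l * (u - a)), fejer x
      = ∫ v in Icc a b, c * (l * fejer (l * (u - v))) := by
        rw [← setIntegral_fejer_comp l u hab, ← integral_const_mul]
    _ ≤ ∫ v in Icc a b, f v * (l * fejer (l * (u - v))) :=
        setIntegral_mono_on ((integrable_fejer_comp hl.ne' u).const_mul c).integrableOn
          hint.integrableOn measurableSet_Icc
          fun v hv => mul_le_mul_of_nonneg_right (hc v hv) (hK v)
    _ ≤ fejerMean f l u :=
        setIntegral_mono_set hint.integrableOn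
          (.of_forall fun v => mul_nonneg (hf0 v) (hK v))
          (Icc_subset_Ioi_iff hab |>.mpr ha).eventuallyLE

lemma fejerMean_le_mul_window (hf : Measurable f) (hf0 : ∀ v, 0 ≤ f v) (hC : ∀ v, f v ≤ C)
    (hl : 0 < l) {a b c : ℝ} (ha : 0 < a) (hab : a ≤ b) (hc : ∀ v ∈ Icc a b, f v ≤ c) (u : ℝ) :
    fejerMean f l u ≤ c * (∫ x in (l * (u - b))..(l * (u - a)), fejer x) +
      C * (fejerMean (fun _ => 1) l u - ∫ x in (l * (u - b))..(l * (u - a)), fejer x) := by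
  have hwin := mul_window_le_fejerMean (f := fun v => C - f v) (C := C) (hf.const_sub C)
    (fun v => abs_le.mpr (by constructor <;> linarith [hf0 v, hC v, hf0 0, hC 0]))
    (fun v => sub_nonneg.mpr (hC v)) hl ha hab (fun v hv => sub_le_sub_left (hc v hv) C) u
  rw [fejerMean_sub measurable_const (fun _ => le_rfl) hf
    (fun v => (abs_of_nonneg (hf0 v)).trans_le (hC v)) hl.ne', fejerMean_const] at hwin
  linarith

lemma exists_window_mass_gt {η κ : ℝ} (hη : 0 < η) (hκ : κ < ∫ x, fejer x) :
    ∃ l > 0, κ < ∫ x in (-(l * η))..(l * η), fejer x := by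
  have hlη : Tendsto (fun l : ℝ => l * η) atTop atTop := tendsto_id.atTop_mul_const hη
  have hmass := intervalIntegral_tendsto_integral integrable_fejer
    (tendsto_neg_atTop_atBot.comp hlη) hlη
  exact ((eventually_gt_atTop 0).and (hmass.eventually (lt_mem_nhds hκ))).exists

variable {A : ℝ → ℝ}

lemma exp_neg_mul_le_of_monotone (hA : Monotone A) (hA0 : ∀ u, 0 ≤ A u) {u v δ : ℝ} (huv : u ≤ v)
    (hvu : v ≤ u + δ) : Real.exp (-δ) * (A u * Real.exp (-u)) ≤ A v * Real.exp (-v) := by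
  calc Real.exp (-δ) * (A u * Real.exp (-u)) = A u * Real.exp (-(u + δ)) := by
        rw [neg_add, Real.exp_add]; ring
    _ ≤ A v * Real.exp (-v) :=
        mul_le_mul (hA huv) (Real.exp_le_exp.mpr (neg_le_neg hvu)) (Real.exp_nonneg _) (hA0 v)

/-- A window of width `2 * η` to the right of `u` carries almost all the mass of a sufficiently
concentrated Fejér kernel, and on it `A v * exp (-v)` is comparable with its value at `u`. -/
lemma eventually_le_of_tendsto_fejerMean (hA : Monotone A) (hA0 : ∀ u, 0 ≤ A u)
    (hAC : ∀ u, A u * Real.exp (-u) ≤ C)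
    (hmean : ∀ l > 0, Tendsto (fejerMean (fun v => A v * Real.exp (-v)) l) atTop
      (𝓝 (∫ x, fejer x))) {η : ℝ} (hη : 0 < η) (hη1 : η < 1) :
    ∀ᶠ u in atTop, A u * Real.exp (-u) ≤ Real.exp (2 * η) * ((1 + η) / (1 - η)) := by
  set κ := ∫ x, fejer x
  set B : ℝ → ℝ := fun v => A v * Real.exp (-v)
  have hκ : 0 < κ := integral_fejer_pos
  have hB0 (v : ℝ) : 0 ≤ B v := mul_nonneg (hA0 v) (Real.exp_nonneg _)
  have hBm : Measurable B := hA.measurable.mul (by fun_prop)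
  obtain ⟨l, hl, hmass⟩ := exists_window_mass_gt hη (show κ * (1 - η) < κ by nlinarith)
  set W := ∫ x in (-(l * η))..(l * η), fejer x
  filter_upwards [(tendsto_atTop_add_const_right atTop η tendsto_id).eventually
      ((hmean l hl).eventually (gt_mem_nhds (show κ < κ * (1 + η) by nlinarith))),
    eventually_gt_atTop 0] with u hmean_lt hu
  have hwin := mul_window_le_fejerMean (a := u) (b := u + 2 * η) hBm
    (fun v => (abs_of_nonneg (hB0 v)).trans_le (hAC v)) hB0 hl hu (by linarith)
    (fun v hv => exp_neg_mul_le_of_monotone hA hA0 hv.1 hv.2) (u + η)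
  rw [show l * (u + η - (u + 2 * η)) = -(l * η) by ring,
    show l * (u + η - u) = l * η by ring] at hwin
  have hlow : Real.exp (-(2 * η)) * B u * (κ * (1 - η)) ≤ Real.exp (-(2 * η)) * B u * W :=
    mul_le_mul_of_nonneg_left hmass.le (mul_nonneg (Real.exp_nonneg _) (hB0 u))
  rw [← inv_mul_le_iff₀ (Real.exp_pos _), ← Real.exp_neg, le_div_iff₀ (by linarith)]
  refine le_of_mul_le_mul_left ?_ hκ
  simp only [id] at hmean_lt
  linarith

lemma eventually_ge_of_tendsto_fejerMean (hA : Monotone A) (hA0 : ∀ u, 0 ≤ A u)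
    (hAC : ∀ u, A u * Real.exp (-u) ≤ C)
    (hmean : ∀ l > 0, Tendsto (fejerMean (fun v => A v * Real.exp (-v)) l) atTop
      (𝓝 (∫ x, fejer x))) {η : ℝ} (hη : 0 < η) :
    ∀ᶠ u in atTop, Real.exp (-(2 * η)) * (1 - (1 + 2 * C) * η) ≤ A u * Real.exp (-u) := by
  set κ := ∫ x, fejer x
  set B : ℝ → ℝ := fun v => A v * Real.exp (-v)
  have hκ : 0 < κ := integral_fejer_pos
  have hB0 (v : ℝ) : 0 ≤ B v := mul_nonneg (hA0 v) (Real.exp_nonneg _)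
  have hBm : Measurable B := hA.measurable.mul (by fun_prop)
  obtain ⟨l, hl, hmass⟩ := exists_window_mass_gt hη (show κ * (1 - η) < κ by nlinarith)
  set W := ∫ x in (-(l * η))..(l * η), fejer x
  have hWκ : W ≤ κ := by
    rw [show W = _ from intervalIntegral.integral_of_le (by nlinarith)]
    exact setIntegral_le_integral integrable_fejer (.of_forall fejer_nonneg)
  have hshift := tendsto_atTop_add_const_right atTop (-η) tendsto_id
  filter_upwards [
    hshift.eventually ((hmean l hl).eventually (lt_mem_nhds (show κ * (1 - η) < κ by nlinarith))),
    hshift.eventually ((tendsto_fejerMean_one hl).eventually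
      (gt_mem_nhds (show κ < κ * (1 + η) by nlinarith))),
    eventually_gt_atTop (2 * η)] with u hmean_gt hone hu
  have hwin := fejerMean_le_mul_window (a := u - 2 * η) (b := u) (c := Real.exp (2 * η) * B u)
    hBm hB0 hAC hl (by linarith) (by linarith) (fun v hv => by
      rw [← inv_mul_le_iff₀ (Real.exp_pos _), ← Real.exp_neg]
      exact exp_neg_mul_le_of_monotone hA hA0 hv.2 (by linarith [hv.1])) (u + -η)
  rw [show l * (u + -η - u) = -(l * η) by ring,
    show l * (u + -η - (u - 2 * η)) = l * η by ring] at hwin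
  have hup : Real.exp (2 * η) * B u * W ≤ Real.exp (2 * η) * B u * κ :=
    mul_le_mul_of_nonneg_left hWκ (mul_nonneg (Real.exp_nonneg _) (hB0 u))
  simp only [id] at hmean_gt hone
  have htail : C * (fejerMean (fun _ => 1) l (u + -η) - W) ≤ C * (2 * η * κ) :=
    mul_le_mul_of_nonneg_left (by linarith) ((hB0 0).trans (hAC 0))
  rw [Real.exp_neg, inv_mul_le_iff₀ (Real.exp_pos _)]
  refine le_of_mul_le_mul_left ?_ hκ
  linarith

lemma tendsto_one_of_eventually_bounds {B : ℝ → ℝ} {C : ℝ}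
    (hB : ∀ η : ℝ, 0 < η → η < 1 → ∀ᶠ u in atTop,
      B u ≤ Real.exp (2 * η) * ((1 + η) / (1 - η)) ∧ Real.exp (-(2 * η)) * (1 - C * η) ≤ B u) :
    Tendsto B atTop (𝓝 1) := by
  have hup : Tendsto (fun η : ℝ => Real.exp (2 * η) * ((1 + η) / (1 - η))) (𝓝[>] 0) (𝓝 1) := by
    have hcont : ContinuousAt (fun η : ℝ => Real.exp (2 * η) * ((1 + η) / (1 - η))) 0 :=
      ContinuousAt.mul (by fun_prop) (ContinuousAt.div (by fun_prop) (by fun_prop) (by norm_num))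
    simpa using hcont.tendsto.mono_left nhdsWithin_le_nhds
  have hlow : Tendsto (fun η : ℝ => Real.exp (-(2 * η)) * (1 - C * η)) (𝓝[>] 0) (𝓝 1) := by
    have hcont : Continuous fun η : ℝ => Real.exp (-(2 * η)) * (1 - C * η) := by fun_prop
    simpa using (hcont.tendsto 0).mono_left nhdsWithin_le_nhds
  have hIoo : ∀ᶠ η : ℝ in 𝓝[>] 0, η ∈ Ioo (0 : ℝ) 1 := Ioo_mem_nhdsGT one_pos
  refine tendsto_order.mpr ⟨fun b hb => ?_, fun b hb => ?_⟩
  · obtain ⟨η, hηb, hη, hη1⟩ := ((hlow.eventually (lt_mem_nhds hb)).and hIoo).exists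
    exact (hB η hη hη1).mono fun u hu => hηb.trans_le hu.2
  · obtain ⟨η, hηb, hη, hη1⟩ := ((hup.eventually (gt_mem_nhds hb)).and hIoo).exists
    exact (hB η hη hη1).mono fun u hu => hu.1.trans_lt hηb

theorem wienerIkehara (hA : Monotone A) (hA0 : ∀ u, 0 ≤ A u)
    (hAC : ∀ u, A u * Real.exp (-u) ≤ C) (hH : ContinuousOn H {s | 0 ≤ s.re})
    (hAH : ∀ s : ℂ, 0 < s.re →
      ∫ v in Ioi (0 : ℝ), ((A v * Real.exp (-v) - 1 : ℝ) : ℂ) * Complex.exp (-s * v) = H s) :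
    Tendsto (fun u => A u * Real.exp (-u)) atTop (𝓝 1) := by
  set B : ℝ → ℝ := fun v => A v * Real.exp (-v)
  have hB0 (v : ℝ) : 0 ≤ B v := mul_nonneg (hA0 v) (Real.exp_nonneg _)
  have hBm : Measurable B := hA.measurable.mul (by fun_prop)
  have hmean (l : ℝ) (hl : 0 < l) : Tendsto (fejerMean B l) atTop (𝓝 (∫ x, fejer x)) := by
    have hzero := tendsto_fejerMean_zero (f := fun v => B v - 1) (C := C + 1) (hBm.sub_const 1)
      (fun v => abs_le.mpr (by constructor <;> linarith [hB0 v, hAC v, hB0 0, hAC 0])) hH hAH hl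
    refine (zero_add (∫ x, fejer x) ▸ hzero.add (tendsto_fejerMean_one hl)).congr fun u => ?_
    rw [fejerMean_sub hBm (fun v => (abs_of_nonneg (hB0 v)).trans_le (hAC v)) measurable_const
      (fun _ => le_rfl) hl.ne', sub_add_cancel]
  exact tendsto_one_of_eventually_bounds fun η hη hη1 =>
    (eventually_le_of_tendsto_fejerMean hA hA0 hAC hmean hη hη1).and
      (eventually_ge_of_tendsto_fejerMean hA hA0 hAC hmean hη)

end WienerIkehara

section MellinTransform

/-- The Laplace transform of `tent`, up to the junk value `0` at `s = 0`; equivalently the Mellin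
transform of `tent ∘ log`. It carries a smoothed counting function to its Dirichlet series. -/
noncomputable def tentTransform (s : ℂ) : ℂ := (Complex.exp s + Complex.exp (-s) - 2) / s ^ 2

lemma sub_one_ne_zero_of_one_lt_re {s : ℂ} (hs : 1 < s.re) : s - 1 ≠ 0 :=
  Complex.ne_zero_of_re_pos (by simpa using hs)

lemma tentTransform_ne_zero {s : ℂ} (hs : 0 < s.re) : tentTransform s ≠ 0 := by
  refine div_ne_zero ?_ (pow_ne_zero _ (Complex.ne_zero_of_re_pos hs))
  have hinv : Complex.exp (-s) * Complex.exp s = 1 := by rw [← Complex.exp_add]; simp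
  have hsq : Complex.exp s + Complex.exp (-s) - 2 =
      Complex.exp (-s) * (Complex.exp s - 1) ^ 2 := by
    linear_combination (2 - Complex.exp s) * hinv
  rw [hsq]
  refine mul_ne_zero (Complex.exp_ne_zero _) (pow_ne_zero _ (sub_ne_zero.mpr fun h => ?_))
  have hnorm := congrArg norm h
  rw [Complex.norm_exp, norm_one] at hnorm
  linarith [Real.add_one_lt_exp hs.ne']

lemma differentiableOn_tentTransform : DifferentiableOn ℂ tentTransform {s | 0 < s.re} :=
  DifferentiableOn.div (by fun_prop) (by fun_prop) fun _ hs =>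
    pow_ne_zero _ (Complex.ne_zero_of_re_pos hs)

lemma mellin_eq_integral_exp (f : ℝ → ℂ) (s : ℂ) :
    mellin f s = ∫ v : ℝ, Complex.exp (s * v) * f (Real.exp v) := by
  rw [mellin, ← Real.range_exp, ← image_univ, integral_image_eq_integral_abs_deriv_smul
    MeasurableSet.univ (fun x _ => (Real.hasDerivAt_exp x).hasDerivWithinAt)
    Real.exp_injective.injOn, setIntegral_univ]
  congr 1 with v
  rw [abs_of_pos (Real.exp_pos v), Complex.real_smul, smul_eq_mul, Complex.ofReal_exp,
    Complex.cpow_def_of_ne_zero (Complex.exp_ne_zero _), ← Complex.ofReal_exp,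
    ← Complex.ofReal_log (Real.exp_pos v).le, Real.log_exp, Complex.ofReal_exp, ← mul_assoc,
    ← Complex.exp_add]
  congr 2
  ring

lemma mellin_tent_log {s : ℂ} (hs : s ≠ 0) :
    mellin (fun x => (tent (Real.log x) : ℂ)) (-s) = tentTransform s := by
  rw [mellin_eq_integral_exp, tentTransform, add_comm (Complex.exp s)]
  have h := integral_tent_mul_cexp (neg_ne_zero.mpr hs)
  rw [neg_neg, neg_sq] at h
  simp_rw [Real.log_exp, ← h, mul_comm]

lemma tent_log_eq_zero_of_le {x : ℝ} (h0 : 0 < x) (hx : x ≤ Real.exp (-1)) :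
    tent (Real.log x) = 0 := by
  have hlog : Real.log x ≤ -1 := (Real.log_le_iff_le_exp h0).mpr hx
  exact tent_of_one_le_abs (le_abs.mpr (Or.inr (by linarith)))

lemma tent_log_eq_zero_of_ge {x : ℝ} (hx : Real.exp 1 ≤ x) : tent (Real.log x) = 0 :=
  tent_of_one_le_abs <| le_abs.mpr <| Or.inl <|
    (Real.le_log_iff_exp_le ((Real.exp_pos 1).trans_le hx)).mpr hx

lemma mellinConvergent_tent_log (s : ℂ) :
    MellinConvergent (fun x => (tent (Real.log x) : ℂ)) s := by
  have hcont : ContinuousOn (fun x => (tent (Real.log x) : ℂ)) (Ioi 0) :=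
    Complex.continuous_ofReal.comp_continuousOn <| continuous_tent.comp_continuousOn <|
      Real.continuousOn_log.mono fun _ hx => (mem_Ioi.mp hx).ne'
  have htop : (fun x => (tent (Real.log x) : ℂ)) =ᶠ[atTop] 0 := by
    filter_upwards [eventually_ge_atTop (Real.exp 1)] with x hx
    rw [tent_log_eq_zero_of_ge hx, Complex.ofReal_zero, Pi.zero_apply]
  have hzero : (fun x => (tent (Real.log x) : ℂ)) =ᶠ[𝓝[>] 0] 0 := by
    filter_upwards [Ioo_mem_nhdsGT (Real.exp_pos (-1))] with x hx
    rw [tent_log_eq_zero_of_le hx.1 hx.2.le, Complex.ofReal_zero, Pi.zero_apply]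
  exact mellinConvergent_of_isBigO_rpow (a := s.re + 1) (b := s.re - 1)
    (hcont.locallyIntegrableOn measurableSet_Ioi)
    (htop.trans_isBigO (Asymptotics.isBigO_zero _ _)) (by linarith)
    (hzero.trans_isBigO (Asymptotics.isBigO_zero _ _)) (by linarith)

lemma mellinConvergent_tent_log_mul (s : ℂ) {a : ℝ} (ha : 0 < a) :
    MellinConvergent (fun x => (tent (Real.log (a⁻¹ * x)) : ℂ)) s :=
  (MellinConvergent.comp_mul_left (f := fun x => (tent (Real.log x) : ℂ)) (inv_pos.mpr ha)).mpr
    (mellinConvergent_tent_log s)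

lemma mellin_tent_log_mul {s : ℂ} (hs : s ≠ 0) {a : ℝ} (ha : 0 < a) :
    mellin (fun x => (tent (Real.log (a⁻¹ * x)) : ℂ)) (-s) = (a : ℂ) ^ (-s) * tentTransform s := by
  rw [mellin_comp_mul_left (fun x => (tent (Real.log x) : ℂ)) (-s) (inv_pos.mpr ha),
    mellin_tent_log hs, smul_eq_mul, neg_neg, Complex.ofReal_inv, Complex.inv_cpow,
    Complex.cpow_neg]
  rw [Complex.arg_ofReal_of_nonneg ha.le]
  exact Real.pi_pos.ne

lemma norm_cpow_sub_one_mul_ofReal {x r : ℝ} (hx : 0 < x) (hr : 0 ≤ r) (s : ℂ) :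
    (‖(x : ℂ) ^ (s - 1) • (r : ℂ)‖ : ℂ) = (x : ℂ) ^ ((s.re : ℂ) - 1) • (r : ℂ) := by
  rw [norm_smul, Complex.norm_cpow_eq_rpow_re_of_pos hx, Complex.norm_of_nonneg hr,
    Complex.ofReal_mul, Complex.ofReal_cpow hx.le, smul_eq_mul, Complex.sub_re, Complex.one_re,
    Complex.ofReal_sub, Complex.ofReal_one]

lemma integral_norm_mellin_tent_log_mul {s : ℂ} (hs : s.re ≠ 0) {a : ℝ} (ha : 0 < a) :
    ∫ x : ℝ in Ioi 0, ‖(x : ℂ) ^ (-s - 1) • (tent (Real.log (a⁻¹ * x)) : ℂ)‖ =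
      a ^ (-s.re) * ‖tentTransform s.re‖ := by
  have hnorm := congrArg norm (mellin_tent_log_mul (Complex.ofReal_ne_zero.mpr hs) ha)
  rw [norm_mul, Complex.norm_cpow_eq_rpow_re_of_pos ha, Complex.neg_re, Complex.ofReal_re] at hnorm
  have hreal : mellin (fun x => (tent (Real.log (a⁻¹ * x)) : ℂ)) (-s.re) =
      (∫ x : ℝ in Ioi 0, ‖(x : ℂ) ^ (-s - 1) • (tent (Real.log (a⁻¹ * x)) : ℂ)‖ : ℝ) := by
    rw [mellin, ← integral_complex_ofReal]
    refine setIntegral_congr_fun measurableSet_Ioi fun x hx => ?_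
    simp only [norm_cpow_sub_one_mul_ofReal hx (tent_nonneg _), Complex.neg_re, Complex.ofReal_neg]
  rw [← hnorm, hreal, Complex.norm_of_nonneg (integral_nonneg fun _ => norm_nonneg _)]

end MellinTransform

section SmoothCount

variable {ι : Type*} {N : ι → ℝ}

/-- The number of indices `i` with `N i` of size comparable to `x`, each weighted by the value of
the tent function at `log (x / N i)`. -/
noncomputable def smoothCount (N : ι → ℝ) (x : ℝ) : ℝ := ∑' i, tent (Real.log ((N i)⁻¹ * x))

lemma tent_log_inv_mul_le {a x M : ℝ} (ha : 1 ≤ a) (hx : x ∈ Ioo 0 M) :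
    ‖tent (Real.log (a⁻¹ * x))‖ ≤ (Real.exp 1 * M) ^ (2 : ℝ) * a ^ (-(2 : ℝ)) := by
  have ha0 : 0 < a := zero_lt_one.trans_le ha
  have hM : 0 < M := hx.1.trans hx.2
  rw [Real.norm_of_nonneg (tent_nonneg _)]
  rcases le_or_gt (a⁻¹ * x) (Real.exp (-1)) with hle | hgt
  · rw [tent_log_eq_zero_of_le (mul_pos (inv_pos.mpr ha0) hx.1) hle]
    positivity
  · rw [Real.exp_neg, inv_mul_eq_div, lt_div_iff₀ ha0, inv_mul_lt_iff₀ (Real.exp_pos 1)] at hgt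
    have hbound : a ≤ Real.exp 1 * M := hgt.le.trans (by gcongr; exact hx.2.le)
    rw [Real.rpow_neg ha0.le, ← div_eq_mul_inv]
    exact (tent_le_one _).trans <| (one_le_div (by positivity)).mpr <|
      Real.rpow_le_rpow ha0.le hbound zero_le_two

lemma continuousOn_smoothCount (hN : ∀ i, 1 ≤ N i)
    (hsum : ∀ σ : ℝ, 1 < σ → Summable fun i => N i ^ (-σ)) :
    ContinuousOn (smoothCount N) (Ioi 0) := fun x hx => by
  have hcont : ContinuousOn (smoothCount N) (Ioo 0 (x + 1)) := by
    refine continuousOn_tsum (fun i => ?_)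
      ((hsum 2 one_lt_two).mul_left ((Real.exp 1 * (x + 1)) ^ (2 : ℝ)))
      fun i y hy => tent_log_inv_mul_le (hN i) hy
    have hpos : 0 < (N i)⁻¹ := inv_pos.mpr (zero_lt_one.trans_le (hN i))
    exact continuous_tent.comp_continuousOn <|
      ContinuousOn.log (by fun_prop) fun y hy => (mul_pos hpos hy.1).ne'
  exact (hcont.continuousAt (Ioo_mem_nhds hx (by linarith))).continuousWithinAt

lemma smoothCount_eq_zero (hN : ∀ i, 1 ≤ N i) {x : ℝ} (h0 : 0 < x) (hx : x ≤ Real.exp (-1)) :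
    smoothCount N x = 0 := by
  refine (tsum_congr fun i => ?_).trans tsum_zero
  exact tent_log_eq_zero_of_le (mul_pos (inv_pos.mpr (zero_lt_one.trans_le (hN i))) h0)
    ((mul_le_of_le_one_left h0.le (inv_le_one_of_one_le₀ (hN i))).trans hx)

lemma mellin_smoothCount [Countable ι] (hN : ∀ i, 0 < N i) {s : ℂ} (hs : 0 < s.re)
    (hsum : Summable fun i => N i ^ (-s.re)) :
    mellin (fun x => (smoothCount N x : ℂ)) (-s) =
      (∑' i, (N i : ℂ) ^ (-s)) * tentTransform s := by
  have hs0 : s ≠ 0 := Complex.ne_zero_of_re_pos hs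
  have hnorm : Summable fun i => ∫ x : ℝ in Ioi 0,
      ‖(x : ℂ) ^ (-s - 1) • (tent (Real.log ((N i)⁻¹ * x)) : ℂ)‖ := by
    simp_rw [integral_norm_mellin_tent_log_mul hs.ne' (hN _)]
    exact hsum.mul_right _
  rw [← tsum_mul_right, ← tsum_congr fun i => mellin_tent_log_mul hs0 (hN i)]
  simp only [mellin]
  rw [(hasSum_integral_of_summable_integral_norm
    (fun i => mellinConvergent_tent_log_mul (-s) (hN i)) hnorm).tsum_eq]
  congr 1 with x
  rw [smoothCount, Complex.ofReal_tsum, smul_eq_mul, ← tsum_mul_left]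
  simp only [smul_eq_mul]

end SmoothCount

section Continuation

lemma cpow_smul_indicator_Ioi (c : ℂ) (s : ℂ) {t : ℝ} (ht : 0 < t) :
    (t : ℂ) ^ (-s - 1) • (Ioi (1 : ℝ)).indicator (fun x : ℝ => c * x) t =
      (Ioi (1 : ℝ)).indicator (fun x : ℝ => c * (x : ℂ) ^ (-s)) t := by
  have ht0 : (t : ℂ) ≠ 0 := Complex.ofReal_ne_zero.mpr ht.ne'
  simp only [indicator_apply, smul_eq_mul]
  split_ifs
  · rw [Complex.cpow_sub _ _ ht0, Complex.cpow_one]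
    field_simp
  · exact mul_zero _

lemma hasMellin_indicator_Ioi_mul (c : ℂ) {s : ℂ} (hs : 1 < s.re) :
    HasMellin ((Ioi (1 : ℝ)).indicator fun x : ℝ => c * x) (-s) (c / (s - 1)) := by
  have hre : (-s).re < -1 := by simpa using hs
  have hsub : Ioi (1 : ℝ) ⊆ Ioi 0 := Ioi_subset_Ioi zero_le_one
  have hcongr : EqOn _ _ (Ioi (0 : ℝ)) := fun t ht => cpow_smul_indicator_Ioi c s ht
  constructor
  · rw [MellinConvergent, integrableOn_congr_fun hcongr measurableSet_Ioi, IntegrableOn,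
      integrable_indicator_iff measurableSet_Ioi, IntegrableOn,
      Measure.restrict_restrict measurableSet_Ioi, inter_eq_left.mpr hsub]
    exact (integrableOn_Ioi_cpow_of_lt hre zero_lt_one).const_mul _
  · rw [mellin, setIntegral_congr_fun measurableSet_Ioi hcongr,
      setIntegral_indicator measurableSet_Ioi, inter_eq_right.mpr hsub, integral_const_mul,
      integral_Ioi_cpow_of_lt hre zero_lt_one, Complex.ofReal_one, Complex.one_cpow, neg_div,
      ← div_neg, mul_one_div, neg_add, neg_neg, ← sub_eq_add_neg]

variable {ι : Type*} {N : ι → ℝ}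

/-- The smoothed counting function minus its main term `c * x`, the latter being switched on only
for `x > 1` so that the difference vanishes near `0`. -/
noncomputable def smoothRemainder (N : ι → ℝ) (c : ℝ) (x : ℝ) : ℂ :=
  smoothCount N x - (Ioi (1 : ℝ)).indicator (fun x : ℝ => (c : ℂ) * x) x

lemma locallyIntegrableOn_smoothRemainder (hN : ∀ i, 1 ≤ N i)
    (hsum : ∀ σ : ℝ, 1 < σ → Summable fun i => N i ^ (-σ)) (c : ℝ) :
    LocallyIntegrableOn (smoothRemainder N c) (Ioi 0) := by
  have hmain : LocallyIntegrable fun x : ℝ => (c : ℂ) * x :=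
    Continuous.locallyIntegrable (by fun_prop)
  exact ((Complex.continuous_ofReal.comp_continuousOn
    (continuousOn_smoothCount hN hsum)).locallyIntegrableOn measurableSet_Ioi).sub
      ((hmain.indicator measurableSet_Ioi).locallyIntegrableOn _)

lemma smoothRemainder_isBigO_atTop {c δ C : ℝ}
    (hA : ∀ x, 1 ≤ x → |smoothCount N x - c * x| ≤ C * x ^ δ) :
    smoothRemainder N c =O[atTop] fun x : ℝ => x ^ δ := by
  refine Asymptotics.IsBigO.of_bound C ?_
  filter_upwards [eventually_gt_atTop 1] with x hx
  rw [smoothRemainder, indicator_of_mem (mem_Ioi.mpr hx), ← Complex.ofReal_mul,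
    ← Complex.ofReal_sub, Complex.norm_real, Real.norm_eq_abs,
    Real.norm_of_nonneg (Real.rpow_nonneg (by linarith) δ)]
  exact hA x hx.le

lemma smoothRemainder_eventuallyEq_zero (hN : ∀ i, 1 ≤ N i) (c : ℝ) :
    smoothRemainder N c =ᶠ[𝓝[>] 0] 0 := by
  filter_upwards [Ioo_mem_nhdsGT (Real.exp_pos (-1))] with x hx
  have hexp : Real.exp (-1) < 1 := by simp
  rw [smoothRemainder, smoothCount_eq_zero hN hx.1 hx.2.le,
    indicator_of_notMem (notMem_Ioi.mpr (hx.2.trans hexp).le), Complex.ofReal_zero, sub_zero,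
    Pi.zero_apply]

theorem exists_differentiableOn_eq_sub_one_mul_tsum [Countable ι] (hN : ∀ i, 1 ≤ N i)
    (hsum : ∀ σ : ℝ, 1 < σ → Summable fun i => N i ^ (-σ)) {c δ C : ℝ} (hc : c ≠ 0) (hδ : 0 ≤ δ)
    (hδ1 : δ < 1) (hA : ∀ x, 1 ≤ x → |smoothCount N x - c * x| ≤ C * x ^ δ) :
    ∃ W : ℂ → ℂ, DifferentiableOn ℂ W {s | δ < s.re} ∧ W 1 ≠ 0 ∧
      ∀ s : ℂ, 1 < s.re → W s = (s - 1) * ∑' i, (N i : ℂ) ^ (-s) := by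
  have hloc := locallyIntegrableOn_smoothRemainder hN hsum c
  have htop : smoothRemainder N c =O[atTop] fun x : ℝ => x ^ (-(-δ)) := by
    rw [neg_neg]; exact smoothRemainder_isBigO_atTop hA
  have hzero (b : ℝ) : smoothRemainder N c =O[𝓝[>] 0] fun x : ℝ => x ^ (-b) :=
    (smoothRemainder_eventuallyEq_zero hN c).trans_isBigO (Asymptotics.isBigO_zero _ _)
  have hdiff : DifferentiableOn ℂ (fun s => mellin (smoothRemainder N c) (-s)) {s | δ < s.re} :=
    fun s hs => ((mellin_differentiableAt_of_isBigO_rpow hloc htop (by simpa using hs)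
      (hzero (-s.re - 1)) (by simp)).comp s
        differentiable_neg.differentiableAt).differentiableWithinAt
  refine ⟨fun s => ((s - 1) * mellin (smoothRemainder N c) (-s) + c) / tentTransform s,
    ?_, ?_, fun s hs => ?_⟩
  · exact (((differentiableOn_id.sub_const 1).mul hdiff).add_const _).div
      (differentiableOn_tentTransform.mono fun s hs => hδ.trans_lt hs)
      fun s hs => tentTransform_ne_zero (hδ.trans_lt hs)
  · simpa using ⟨hc, tentTransform_ne_zero (by simp)⟩
  · have hs0 : 0 < s.re := zero_lt_one.trans hs
    have hrem : MellinConvergent (smoothRemainder N c) (-s) :=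
      mellinConvergent_of_isBigO_rpow hloc htop (by simpa using hδ1.trans hs)
        (hzero (-s.re - 1)) (by simp)
    have hsplit : mellin (fun x => (smoothCount N x : ℂ)) (-s) =
        mellin (smoothRemainder N c) (-s) + c / (s - 1) := by
      have hmain := hasMellin_indicator_Ioi_mul c hs
      rw [← hmain.2, ← (hasMellin_add hrem hmain.1).2]
      simp only [smoothRemainder, sub_add_cancel]
    rw [mellin_smoothCount (fun i => zero_lt_one.trans_le (hN i)) hs0 (hsum _ hs)] at hsplit
    rw [div_eq_iff (tentTransform_ne_zero hs0), mul_assoc, hsplit, mul_add,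
      mul_div_cancel₀ _ (sub_one_ne_zero_of_one_lt_re hs)]

end Continuation

section LatticeSum

open Module

variable {E ι : Type*} [NormedAddCommGroup E] [NormedSpace ℝ E] [Fintype ι]
  (b : Basis ι ℝ E)

lemma floor_add_of_mem_fundamentalDomain (l : Submodule.span ℤ (range b)) {x : E}
    (hx : x ∈ ZSpan.fundamentalDomain b) : (ZSpan.floor b (l + x) : E) = l := by
  have hfract := ZSpan.fract_zSpan_add b x l.2
  rw [ZSpan.fract_eq_self.mpr hx, ZSpan.fract_apply] at hfract
  rw [sub_eq_iff_eq_add', add_left_inj] at hfract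
  exact hfract.symm

lemma norm_sub_floor_le (x : E) : ‖x - ZSpan.floor b x‖ ≤ ∑ i, ‖b i‖ :=
  ZSpan.norm_fract_le b x

variable {F : E → ℝ} {κ : NNReal} {T : ℝ}

lemma support_comp_floor_subset (hT : Function.support F ⊆ Metric.closedBall 0 T) :
    Function.support (fun x => F (ZSpan.floor b x)) ⊆
      Metric.closedBall 0 (T + ∑ i, ‖b i‖) := fun x hx => by
  have hfloor := mem_closedBall_zero_iff.mp (hT hx)
  have htri := norm_add_le (ZSpan.floor b x : E) (x - ZSpan.floor b x)
  rw [add_sub_cancel] at htri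
  exact mem_closedBall_zero_iff.mpr (htri.trans (add_le_add hfloor (norm_sub_floor_le b x)))

lemma lipschitzWith_comp_inv_smul (hF : LipschitzWith κ F) (R : NNReal) :
    LipschitzWith (κ * R⁻¹) fun x => F ((R : ℝ)⁻¹ • x) := by
  refine hF.comp (LipschitzWith.of_dist_le_mul fun x y => ?_)
  rw [dist_smul₀, norm_inv, NNReal.norm_eq, NNReal.coe_inv]

lemma support_comp_inv_smul_subset (hT : Function.support F ⊆ Metric.closedBall 0 T) {R : ℝ}
    (hR : 0 < R) : Function.support (fun x => F (R⁻¹ • x)) ⊆ Metric.closedBall 0 (R * T) :=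
  fun x hx => by
    have hx := mem_closedBall_zero_iff.mp (hT hx)
    rw [norm_smul, norm_inv, Real.norm_of_nonneg hR.le, inv_mul_le_iff₀ hR] at hx
    exact mem_closedBall_zero_iff.mpr hx

variable [MeasurableSpace E] [BorelSpace E]

lemma measurable_floor : Measurable fun x => (ZSpan.floor b x : E) := by
  have : FiniteDimensional ℝ E := Module.Finite.of_basis b
  have hfloor (x : E) : (ZSpan.floor b x : E) = ∑ i, (⌊b.repr x i⌋ : ℝ) • b i := by
    simp [ZSpan.floor, Int.cast_smul_eq_zsmul]
  have hcoord (i : ι) : Measurable fun x => b.repr x i :=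
    (LinearMap.continuous_of_finiteDimensional (b.coord i)).measurable
  simp_rw [hfloor]
  have hcast : Measurable ((↑) : ℤ → ℝ) := measurable_of_countable _
  exact Finset.measurable_sum _ fun i _ =>
    (hcast.comp (Int.measurable_floor.comp (hcoord i))).smul_const _

lemma integral_comp_floor (μ : Measure E) [μ.IsAddHaarMeasure] {F : E → ℝ}
    (hF : Integrable (fun x => F (ZSpan.floor b x)) μ) :
    ∫ x, F (ZSpan.floor b x) ∂μ =
      μ.real (ZSpan.fundamentalDomain b) * ∑' l : Submodule.span ℤ (range b), F l := by
  have : VAddInvariantMeasure (Submodule.span ℤ (range b)) E μ :=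
    ⟨fun c s _ => measure_preimage_add μ (c : E) s⟩
  rw [(ZSpan.isAddFundamentalDomain b μ).integral_eq_tsum'' _ hF, ← tsum_mul_left]
  refine tsum_congr fun l => ?_
  rw [← smul_eq_mul, ← setIntegral_const]
  refine setIntegral_congr_fun (ZSpan.fundamentalDomain_measurableSet b) fun x hx => ?_
  simp only [Submodule.vadd_def, vadd_eq_add, floor_add_of_mem_fundamentalDomain b l hx]

lemma integrable_of_lipschitzWith_of_support_subset [FiniteDimensional ℝ E]
    (hF : LipschitzWith κ F) (hT : Function.support F ⊆ Metric.closedBall 0 T)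
    (μ : Measure E) [IsFiniteMeasureOnCompacts μ] : Integrable F μ :=
  have := FiniteDimensional.proper ℝ E
  hF.continuous.integrable_of_hasCompactSupport <|
    .of_support_subset_isCompact (isCompact_closedBall 0 T) hT

lemma integrable_comp_floor (hF : LipschitzWith κ F)
    (hT : Function.support F ⊆ Metric.closedBall 0 T) (μ : Measure E) [μ.IsAddHaarMeasure] :
    Integrable (fun x => F (ZSpan.floor b x)) μ := by
  have : FiniteDimensional ℝ E := Module.Finite.of_basis b
  have := FiniteDimensional.proper ℝ E
  obtain ⟨M, hM⟩ := hF.continuous.bounded_above_of_compact_support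
    (HasCompactSupport.of_support_subset_isCompact (isCompact_closedBall 0 T) hT)
  refine (integrableOn_iff_integrable_of_support_subset (support_comp_floor_subset b hT)).mp ?_
  exact Measure.integrableOn_of_bounded (measure_closedBall_lt_top (μ := μ)).ne
    (hF.continuous.measurable.comp (measurable_floor b)).aestronglyMeasurable
    (Eventually.of_forall fun x => hM _)

lemma abs_measure_mul_tsum_sub_integral_le (hF : LipschitzWith κ F)
    (hT : Function.support F ⊆ Metric.closedBall 0 T) (μ : Measure E) [μ.IsAddHaarMeasure] :
    |μ.real (ZSpan.fundamentalDomain b) * ∑' l : Submodule.span ℤ (range b), F l - ∫ x, F x ∂μ| ≤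
      κ * (∑ i, ‖b i‖) * μ.real (Metric.closedBall 0 (T + ∑ i, ‖b i‖)) := by
  have : FiniteDimensional ℝ E := Module.Finite.of_basis b
  have := FiniteDimensional.proper ℝ E
  have hfloor := integrable_comp_floor b hF hT μ
  have hsupp (x : E) (hx : x ∉ Metric.closedBall 0 (T + ∑ i, ‖b i‖)) :
      F (ZSpan.floor b x) - F x = 0 := by
    have hball : Metric.closedBall (0 : E) T ⊆ Metric.closedBall 0 (T + ∑ i, ‖b i‖) :=
      Metric.closedBall_subset_closedBall (le_add_of_nonneg_right (by positivity))
    rw [Function.notMem_support.mp fun h => hx (support_comp_floor_subset b hT h),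
      Function.notMem_support.mp fun h => hx (hball (hT h)), sub_zero]
  rw [← integral_comp_floor b μ hfloor, ← integral_sub hfloor
    (integrable_of_lipschitzWith_of_support_subset hF hT μ),
    ← setIntegral_eq_integral_of_forall_compl_eq_zero hsupp, ← Real.norm_eq_abs]
  refine norm_setIntegral_le_of_norm_le_const measure_closedBall_lt_top fun x _ => ?_
  refine (hF.norm_sub_le _ _).trans ?_
  rw [norm_sub_rev]
  exact mul_le_mul_of_nonneg_left (norm_sub_floor_le b x) κ.2

variable [FiniteDimensional ℝ E] (Λ : Submodule ℤ E) [DiscreteTopology Λ] [IsZLattice ℝ Λ]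

lemma exists_abs_covolume_mul_tsum_sub_integral_le (μ : Measure E) [μ.IsAddHaarMeasure] :
    ∃ d : ℝ, 0 ≤ d ∧ ∀ {F : E → ℝ} {κ : NNReal} {T : ℝ}, LipschitzWith κ F →
      Function.support F ⊆ Metric.closedBall 0 T →
      |ZLattice.covolume Λ μ * ∑' l : Λ, F l - ∫ x, F x ∂μ| ≤
        κ * d * μ.real (Metric.closedBall 0 (T + d)) := by
  have : Module.Finite ℤ Λ := ZLattice.module_finite ℝ Λ
  have : Module.Free ℤ Λ := ZLattice.module_free ℝ Λ
  let b := Free.chooseBasis ℤ Λ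
  refine ⟨∑ i, ‖b.ofZLatticeBasis ℝ Λ i‖, by positivity, fun {F κ T} hF hT => ?_⟩
  have hspan : ∑' l : Λ, F l =
      ∑' l : Submodule.span ℤ (range (b.ofZLatticeBasis ℝ Λ)), F l := by
    rw [b.ofZLatticeBasis_span ℝ]
  rw [hspan, ZLattice.covolume_eq_measure_fundamentalDomain Λ μ
    (ZLattice.isAddFundamentalDomain b μ)]
  exact abs_measure_mul_tsum_sub_integral_le _ hF hT μ

theorem exists_abs_tsum_inv_smul_sub_le (hF : LipschitzWith κ F) (hT0 : 0 ≤ T)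
    (hT : Function.support F ⊆ Metric.closedBall 0 T) (μ : Measure E) [μ.IsAddHaarMeasure] :
    ∃ C, ∀ R : ℝ, 1 ≤ R → |∑' l : Λ, F (R⁻¹ • (l : E)) -
      R ^ finrank ℝ E * ((∫ x, F x ∂μ) / ZLattice.covolume Λ μ)| ≤
        C * (R ^ finrank ℝ E / R) := by
  obtain ⟨d, hd, hbound⟩ := exists_abs_covolume_mul_tsum_sub_integral_le Λ μ
  set n := finrank ℝ E
  set v := μ.real (Metric.ball (0 : E) 1)
  have hV := ZLattice.covolume_pos Λ μ
  refine ⟨κ * d * ((T + d) ^ n * v) / ZLattice.covolume Λ μ, fun R hR => ?_⟩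
  have hR0 : 0 < R := zero_lt_one.trans_le hR
  lift R to NNReal using hR0.le
  have hscaled := hbound (lipschitzWith_comp_inv_smul hF R)
    (support_comp_inv_smul_subset hT hR0)
  rw [Measure.integral_comp_inv_smul, abs_of_nonneg (a := (R : ℝ) ^ finrank ℝ E) (by positivity),
    smul_eq_mul, measureReal_def, Measure.addHaar_closedBall μ _ (by positivity),
    ENNReal.toReal_mul, ENNReal.toReal_ofReal (by positivity)] at hscaled
  have hdiv : ∑' l : Λ, F ((R : ℝ)⁻¹ • (l : E)) -
      (R : ℝ) ^ n * ((∫ x, F x ∂μ) / ZLattice.covolume Λ μ) =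
        (ZLattice.covolume Λ μ * ∑' l : Λ, F ((R : ℝ)⁻¹ • (l : E)) -
          (R : ℝ) ^ n * ∫ x, F x ∂μ) / ZLattice.covolume Λ μ := by
    field_simp
  rw [hdiv, abs_div, abs_of_pos hV, div_mul_eq_mul_div]
  refine div_le_div_of_nonneg_right (hscaled.trans ?_) hV.le
  have hradius : (R * T + d) ^ n ≤ (R : ℝ) ^ n * (T + d) ^ n := by
    rw [← mul_pow, mul_add]
    gcongr
    exact le_mul_of_one_le_left hd hR
  calc ((κ * R⁻¹ : NNReal) : ℝ) * d * ((R * T + d) ^ n * v)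
      ≤ ((κ * R⁻¹ : NNReal) : ℝ) * d * (((R : ℝ) ^ n * (T + d) ^ n) * v) := by gcongr
    _ = κ * d * ((T + d) ^ n * v) * ((R : ℝ) ^ n / R) := by push_cast; ring

end LatticeSum

section Lipschitz

lemma norm_prod_sub_prod_le {ι R : Type*} [NormedCommRing R] [NormOneClass R] (s : Finset ι)
    {a b : ι → R} (ha : ∀ i, ‖a i‖ ≤ 1) (hb : ∀ i, ‖b i‖ ≤ 1) :
    ‖∏ i ∈ s, a i - ∏ i ∈ s, b i‖ ≤ ∑ i ∈ s, ‖a i - b i‖ := by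
  classical
  induction s using Finset.induction_on with
  | empty => simp
  | insert j s hj ih =>
    have hsplit : a j * ∏ i ∈ s, a i - b j * ∏ i ∈ s, b i =
        (a j - b j) * ∏ i ∈ s, a i + b j * (∏ i ∈ s, a i - ∏ i ∈ s, b i) := by ring
    have hprod : ‖∏ i ∈ s, a i‖ ≤ 1 := (s.norm_prod_le a).trans
      (Finset.prod_le_one (fun i _ => norm_nonneg _) fun i _ => ha i)
    rw [Finset.prod_insert hj, Finset.prod_insert hj, Finset.sum_insert hj, hsplit]
    refine norm_add_le_of_le (norm_mul_le_of_le le_rfl hprod |>.trans_eq (mul_one _)) ?_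
    exact (norm_mul_le_of_le (hb j) ih).trans_eq (one_mul _)

lemma exists_lipschitzWith_prod_tent {V κ : Type*} [NormedAddCommGroup V] [NormedSpace ℝ V]
    [FiniteDimensional ℝ V] [Fintype κ] {f : V →ₗ[ℝ] κ → ℝ} (hf : Function.Injective f) :
    ∃ L T, LipschitzWith L (fun y => ∏ k, tent (f y k)) ∧
      Function.support (fun y => ∏ k, tent (f y k)) ⊆ Metric.closedBall 0 T := by
  obtain ⟨A, -, hA⟩ := f.exists_antilipschitzWith (LinearMap.ker_eq_bot.mpr hf)
  obtain ⟨L, hL⟩ : ∃ L, LipschitzWith L f := ⟨_, f.toContinuousLinearMap.lipschitz⟩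
  have htent (t : ℝ) : ‖tent t‖ ≤ 1 := by
    rw [Real.norm_of_nonneg (tent_nonneg t)]
    exact tent_le_one t
  refine ⟨Fintype.card κ * L, A, .of_dist_le_mul fun y z => ?_, fun y hy => ?_⟩
  · calc ‖∏ k, tent (f y k) - ∏ k, tent (f z k)‖
        ≤ ∑ k, ‖tent (f y k) - tent (f z k)‖ :=
          norm_prod_sub_prod_le _ (fun _ => htent _) fun _ => htent _
      _ ≤ ∑ _k : κ, L * dist y z := Finset.sum_le_sum fun k _ =>
          ((lipschitzWith_tent.comp (LipschitzWith.eval k)).comp hL).dist_le_mul y z |>.trans_eq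
            (by simp)
      _ = (Fintype.card κ * L : NNReal) * dist y z := by simp [mul_assoc]
  · have hnorm : ‖f y‖ ≤ 1 := (pi_norm_le_iff_of_nonneg zero_le_one).mpr fun k => by
      by_contra! hk
      exact hy (Finset.prod_eq_zero (Finset.mem_univ k) (tent_of_one_le_abs hk.le))
    have hdist := hA.le_mul_dist y 0
    rw [map_zero, dist_zero_right, dist_zero_right] at hdist
    exact mem_closedBall_zero_iff.mpr (hdist.trans (mul_le_of_le_one_right A.2 hnorm))

lemma lipschitzWith_log_max {ε : ℝ} (hε : 0 < ε) :
    LipschitzWith (Real.toNNReal ε⁻¹) fun t => Real.log (max t ε) := by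
  have hlog : LipschitzOnWith (Real.toNNReal ε⁻¹) Real.log (Ici ε) := by
    refine (convex_Ici ε).lipschitzOnWith_of_nnnorm_deriv_le
      (fun t ht => Real.differentiableAt_log (hε.trans_le ht).ne') fun t ht => ?_
    rw [Real.deriv_log, ← NNReal.coe_le_coe, coe_nnnorm, norm_inv,
      Real.norm_of_nonneg (hε.trans_le ht).le, Real.coe_toNNReal _ (inv_nonneg.mpr hε.le)]
    exact inv_anti₀ hε ht
  have hmax : LipschitzWith 1 fun t => max t ε := LipschitzWith.id.max_const ε
  rw [← mul_one (Real.toNNReal ε⁻¹), ← lipschitzOnWith_univ]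
  exact hlog.comp hmax.lipschitzOnWith fun t _ => le_max_right t ε

variable {E ι : Type*} [Fintype ι] {p : E → ι → ℝ} {F : (ι → ℝ) → ℝ} {f : E → ℝ} {T : ℝ}

/- Since `F` vanishes where a coordinate is below `-T`, replacing `p` by `max p (exp (-(T + 1)))`
does not change `f`, and removes the singularity of the logarithm. -/
lemma eq_comp_log_max_of_support_subset (hp : ∀ x w, 0 ≤ p x w)
    (hT : Function.support F ⊆ Metric.closedBall 0 T)
    (hf : ∀ x, (∀ w, p x w ≠ 0) → f x = F fun w => Real.log (p x w))
    (hf0 : ∀ x w, p x w = 0 → f x = 0) (x : E) :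
    f x = F fun w => Real.log (max (p x w) (Real.exp (-(T + 1)))) := by
  have hF0 (y : ι → ℝ) (w : ι) (hy : y w ≤ -(T + 1)) : F y = 0 := by
    by_contra hFy
    have hnorm := (norm_le_pi_norm y w).trans (mem_closedBall_zero_iff.mp (hT hFy))
    linarith [neg_le_of_abs_le hnorm]
  by_cases hlow : ∃ w, p x w ≤ Real.exp (-(T + 1))
  · obtain ⟨w, hw⟩ := hlow
    rw [hF0 _ w (by rw [max_eq_right hw, Real.log_exp])]
    by_cases hzero : ∃ w, p x w = 0
    · exact hf0 x _ hzero.choose_spec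
    · push Not at hzero
      rw [hf x hzero, hF0 _ w]
      exact (Real.log_le_iff_le_exp ((hp x w).lt_of_ne' (hzero w))).mpr hw
  · push Not at hlow
    rw [hf x fun w => ((Real.exp_pos _).trans (hlow w)).ne']
    simp only [fun w => max_eq_left (hlow w).le]

lemma exists_lipschitzWith_of_comp_log [SeminormedAddCommGroup E] {κ : NNReal}
    (hp : ∀ x w, 0 ≤ p x w)
    (hpL : LipschitzWith 1 p) (hpn : ∀ x, ‖x‖ ≤ ‖p x‖) (hF : LipschitzWith κ F)
    (hT : Function.support F ⊆ Metric.closedBall 0 T)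
    (hf : ∀ x, (∀ w, p x w ≠ 0) → f x = F fun w => Real.log (p x w))
    (hf0 : ∀ x w, p x w = 0 → f x = 0) :
    ∃ κ' T', LipschitzWith κ' f ∧ Function.support f ⊆ Metric.closedBall 0 T' := by
  have hmax := funext (eq_comp_log_max_of_support_subset hp hT hf hf0)
  have hlog : LipschitzWith (Real.toNNReal (Real.exp (-(T + 1)))⁻¹) fun (y : ι → ℝ) w =>
      Real.log (max (y w) (Real.exp (-(T + 1)))) := by
    refine LipschitzWith.of_dist_le_mul fun y z => ?_
    refine (dist_pi_le_iff (by positivity)).mpr fun w => ?_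
    refine ((lipschitzWith_log_max (Real.exp_pos _)).dist_le_mul _ _).trans ?_
    gcongr
    exact dist_le_pi_dist y z w
  rw [hmax]
  refine ⟨_, Real.exp T, hF.comp (hlog.comp hpL), fun x hx => ?_⟩
  refine mem_closedBall_zero_iff.mpr <| (hpn x).trans ?_
  refine (pi_norm_le_iff_of_nonneg (Real.exp_pos T).le).mpr fun w => ?_
  have hle := (norm_le_pi_norm _ w).trans (mem_closedBall_zero_iff.mp (hT hx))
  rw [Real.norm_of_nonneg (hp x w)]
  refine (le_max_left _ (Real.exp (-(T + 1)))).trans ?_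
  exact (Real.log_le_iff_le_exp (lt_max_of_lt_right (Real.exp_pos _))).mp (le_of_abs_le hle)

end Lipschitz

section PartitionOfUnity

lemma tsum_tent_add (c : ℝ) : ∑' k : ℤ, ENNReal.ofReal (tent (k + c)) = 1 := by
  have hshift (k : ℤ) : ((Equiv.addRight (-⌊c⌋) k : ℤ) : ℝ) + c = k + Int.fract c := by
    rw [Equiv.coe_addRight, Int.fract]
    push_cast
    ring
  have hfract0 := Int.fract_nonneg c
  have hfract1 := Int.fract_lt_one c
  rw [← (Equiv.addRight (-⌊c⌋)).tsum_eq, tsum_eq_sum (s := {0, -1}) fun k hk => ?_]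
  · rw [Finset.sum_pair (by norm_num), ← ENNReal.ofReal_add (tent_nonneg _) (tent_nonneg _),
      hshift, hshift, Int.cast_zero, Int.cast_neg, Int.cast_one, zero_add,
      tent_of_abs_le_one (abs_le.mpr (by constructor <;> linarith)),
      tent_of_abs_le_one (abs_le.mpr (by constructor <;> linarith)),
      abs_of_nonneg hfract0, abs_of_nonpos (by linarith)]
    ring_nf
    exact ENNReal.ofReal_one
  · have hcases : (1 : ℝ) ≤ k ∨ (k : ℝ) ≤ -2 := by
      have : 1 ≤ k ∨ k ≤ -2 := by
        simp only [Finset.mem_insert, Finset.mem_singleton] at hk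
        omega
      exact_mod_cast this
    have habs : 1 ≤ |(k : ℝ) + Int.fract c| :=
      le_abs.mpr (hcases.imp (by intro; linarith) (by intro; linarith))
    rw [hshift, tent_of_one_le_abs habs, ENNReal.ofReal_zero]

lemma tsum_prod_tent_add (r : ℕ) (c : Fin r → ℝ) :
    ∑' m : Fin r → ℤ, ENNReal.ofReal (∏ i, tent (m i + c i)) = 1 := by
  induction r with
  | zero => simp
  | succ r ih =>
    have hcons (a : ℤ) (m : Fin r → ℤ) :
        ENNReal.ofReal (∏ i, tent ((Fin.consEquiv (fun _ : Fin (r + 1) => ℤ) (a, m) i : ℤ) + c i)) =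
          ENNReal.ofReal (tent (a + c 0)) *
            ENNReal.ofReal (∏ i, tent (m i + c i.succ)) := by
      rw [Fin.prod_univ_succ, ENNReal.ofReal_mul (tent_nonneg _)]
      simp [Fin.consEquiv]
    rw [← (Fin.consEquiv fun _ : Fin (r + 1) => ℤ).tsum_eq, ENNReal.tsum_prod']
    simp_rw [hcons, ENNReal.tsum_mul_left, ih, mul_one]
    exact tsum_tent_add (c 0)

end PartitionOfUnity

section Bump

open NumberField NumberField.InfinitePlace NumberField.mixedEmbedding NumberField.Units
  NumberField.Units.dirichletUnitTheorem

variable (K : Type*) [Field K] [NumberField K]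

open Classical in
/-- The basis of the logarithmic space formed by the logarithms of the fundamental units. -/
noncomputable def logBasis : Module.Basis (Fin (Units.rank K)) ℝ (logSpace K) :=
  (basisUnitLattice K).ofZLatticeBasis ℝ (unitLattice K)

/-- A weight on the mixed space whose translates by units modulo torsion sum to one: it replaces
the indicator function of a fundamental domain for the action of the units, but is Lipschitz. -/
noncomputable def unitWeight (x : mixedSpace K) : ℝ :=
  ∏ i, tent ((logBasis K).repr (logMap x) i)

/-- The product of `unitWeight` and a tent function of the logarithm of the norm. It is set to zero
where the norm vanishes, where the logarithms are junk values. -/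
noncomputable def bump (x : mixedSpace K) : ℝ :=
  if mixedEmbedding.norm x = 0 then 0
  else unitWeight K x * tent (Real.log (mixedEmbedding.norm x))

variable {K}

lemma unitWeight_nonneg (x : mixedSpace K) : 0 ≤ unitWeight K x :=
  Finset.prod_nonneg fun _ _ => tent_nonneg _

lemma bump_of_norm_eq_zero {x : mixedSpace K} (hx : mixedEmbedding.norm x = 0) : bump K x = 0 :=
  if_pos hx

lemma bump_of_norm_ne_zero {x : mixedSpace K} (hx : mixedEmbedding.norm x ≠ 0) :
    bump K x = unitWeight K x * tent (Real.log (mixedEmbedding.norm x)) :=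
  if_neg hx

lemma bump_nonneg (x : mixedSpace K) : 0 ≤ bump K x := by
  unfold bump
  split_ifs
  exacts [le_rfl, mul_nonneg (unitWeight_nonneg x) (tent_nonneg _)]

lemma bump_one : bump K 1 = 1 := by
  simp [bump, unitWeight, tent]

lemma repr_logEmbedding (ζ : torsion K) (m : Fin (Units.rank K) → ℤ) (i : Fin (Units.rank K)) :
    (logBasis K).repr (logEmbedding K
      (Additive.ofMul ((ζ : (𝓞 K)ˣ) * ∏ i, fundSystem K i ^ m i))) i = m i := by
  have hlog : logEmbedding K (Additive.ofMul ((ζ : (𝓞 K)ˣ) * ∏ i, fundSystem K i ^ m i)) =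
      ∑ i, (m i : ℝ) • logBasis K i := by
    rw [ofMul_mul, map_add, ofMul_prod, map_sum, logEmbedding_eq_zero_iff.mpr ζ.2, zero_add]
    refine Finset.sum_congr rfl fun j _ => ?_
    rw [ofMul_zpow, map_zsmul, logEmbedding_fundSystem, logBasis,
      Module.Basis.ofZLatticeBasis_apply, Int.cast_smul_eq_zsmul]
  rw [hlog, Module.Basis.repr_sum_self]

lemma bijective_torsion_mul_prod_fundSystem :
    Function.Bijective fun p : torsion K × (Fin (Units.rank K) → ℤ) =>
      (p.1 : (𝓞 K)ˣ) * ∏ i, fundSystem K i ^ p.2 i := by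
  refine (Function.bijective_iff_existsUnique _).mpr fun u => ?_
  obtain ⟨p, hp, hunique⟩ := exist_unique_eq_mul_prod K u
  exact ⟨p, hp.symm, fun q hq => hunique q hq.symm⟩

lemma tsum_unitWeight_smul {x : mixedSpace K} (hx : mixedEmbedding.norm x ≠ 0) :
    ∑' u : (𝓞 K)ˣ, ENNReal.ofReal (unitWeight K (u • x)) = torsionOrder K := by
  have hweight (ζ : torsion K) (m : Fin (Units.rank K) → ℤ) :
      ENNReal.ofReal (unitWeight K (((ζ : (𝓞 K)ˣ) * ∏ i, fundSystem K i ^ m i) • x)) =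
        ENNReal.ofReal (∏ i, tent (m i + (logBasis K).repr (logMap x) i)) := by
    simp_rw [unitWeight, logMap_unit_smul _ hx, map_add, Finsupp.add_apply, repr_logEmbedding]
  rw [← (Equiv.ofBijective _ bijective_torsion_mul_prod_fundSystem).tsum_eq,
    ENNReal.tsum_prod']
  simp_rw [Equiv.ofBijective_apply, hweight, tsum_prod_tent_add]
  rw [ENNReal.tsum_const, mul_one, ENat.card_eq_coe_natCard, torsionOrder]
  simp

lemma bump_inv_smul {x : mixedSpace K} (hx : mixedEmbedding.norm x ≠ 0) {R : ℝ} (hR : 0 < R) :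
    bump K (R⁻¹ • x) = unitWeight K x *
      tent (Real.log ((mixedEmbedding.norm x)⁻¹ * R ^ Module.finrank ℚ K)) := by
  have hnorm : mixedEmbedding.norm (R⁻¹ • x) =
      ((mixedEmbedding.norm x)⁻¹ * R ^ Module.finrank ℚ K)⁻¹ := by
    rw [mixedEmbedding.norm_smul, abs_of_pos (inv_pos.mpr hR), inv_pow, mul_inv, inv_inv, mul_comm]
  have hnorm0 : mixedEmbedding.norm (R⁻¹ • x) ≠ 0 := by
    rw [hnorm]
    positivity
  rw [bump_of_norm_ne_zero hnorm0, unitWeight, unitWeight, logMap_real_smul hx (by positivity),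
    hnorm, Real.log_inv, tent, tent, abs_neg]

open Classical in
lemma lipschitzWith_normAtPlace :
    LipschitzWith 1 fun (x : mixedSpace K) (w : InfinitePlace K) => normAtPlace w x := by
  refine LipschitzWith.of_dist_le_mul fun x y => ?_
  rw [NNReal.coe_one, one_mul]
  refine (dist_pi_le_iff dist_nonneg).mpr fun w => ?_
  have hsub (x y : mixedSpace K) : normAtPlace w x - normAtPlace w y ≤ dist x y := by
    have hle : normAtPlace w (x - y) ≤ dist x y := by
      rw [dist_eq_norm, norm_eq_sup'_normAtPlace]
      exact Finset.le_sup' (fun w => normAtPlace w (x - y)) (Finset.mem_univ w)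
    have hadd := normAtPlace_add_le w (x - y) y
    rw [sub_add_cancel] at hadd
    linarith
  exact abs_sub_le_iff.mpr ⟨hsub x y, dist_comm x y ▸ hsub y x⟩

open Classical in
lemma norm_le_norm_normAtPlace (x : mixedSpace K) :
    ‖x‖ ≤ ‖fun w : InfinitePlace K => normAtPlace w x‖ := by
  rw [norm_eq_sup'_normAtPlace]
  exact Finset.sup'_le _ _ fun w _ => (le_abs_self _).trans
    (norm_le_pi_norm (fun w : InfinitePlace K => normAtPlace w x) w)

variable (K) in
/-- The weighted sum of coordinates: the logarithm of the norm in terms of the logarithms of the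
absolute values. -/
noncomputable def logSum : (InfinitePlace K → ℝ) →ₗ[ℝ] ℝ :=
  ∑ w, (mult w : ℝ) • LinearMap.proj w

variable (K) in
/-- The linear map expressing `logMap` in terms of the logarithms of the absolute values. -/
noncomputable def logProj : (InfinitePlace K → ℝ) →ₗ[ℝ] logSpace K :=
  LinearMap.pi fun w => (mult w.1 : ℝ) •
    (LinearMap.proj w.1 - (Module.finrank ℚ K : ℝ)⁻¹ • logSum K)

variable (K) in
/-- The coordinates of a vector of logarithms with respect to the norm and the fundamental units. -/
noncomputable def logCoord : (InfinitePlace K → ℝ) →ₗ[ℝ] Option (Fin (Units.rank K)) → ℝ :=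
  LinearMap.pi fun k => k.elim (logSum K) fun i => (logBasis K).coord i ∘ₗ logProj K

lemma logSum_apply (y : InfinitePlace K → ℝ) : logSum K y = ∑ w, mult w * y w := by
  simp [logSum]

lemma logProj_apply (y : InfinitePlace K → ℝ) (w : {w : InfinitePlace K // w ≠ w₀}) :
    logProj K y w = mult w.1 * (y w.1 - logSum K y * (Module.finrank ℚ K : ℝ)⁻¹) := by
  simp [logProj, mul_comm]

lemma logCoord_injective : Function.Injective (logCoord K) := by
  refine LinearMap.ker_eq_bot.mp (LinearMap.ker_eq_bot'.mpr fun y hy => ?_)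
  have hsum : logSum K y = 0 := congrFun hy none
  have hproj : logProj K y = 0 := (logBasis K).ext_elem fun i => by
    simpa [logCoord] using congrFun hy (some i)
  have hne (w : InfinitePlace K) (hw : w ≠ w₀) : y w = 0 := by
    have hw := (logProj_apply y ⟨w, hw⟩).symm.trans (congrFun hproj ⟨w, hw⟩)
    simpa [hsum, mult_coe_ne_zero] using hw
  have hw₀ : y w₀ = 0 := by
    rw [logSum_apply, Finset.sum_eq_single w₀ (fun w _ hw => by rw [hne w hw, mul_zero])
      (by simp)] at hsum
    exact (mul_eq_zero.mp hsum).resolve_left mult_coe_ne_zero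
  ext w
  obtain rfl | hw := eq_or_ne w w₀
  exacts [hw₀, hne w hw]

lemma log_norm_eq_logSum {x : mixedSpace K} (hx : ∀ w, normAtPlace w x ≠ 0) :
    Real.log (mixedEmbedding.norm x) = logSum K fun w => Real.log (normAtPlace w x) := by
  simp_rw [mixedEmbedding.norm_apply, Real.log_prod fun w _ => pow_ne_zero _ (hx w), Real.log_pow,
    logSum_apply]

lemma bump_eq_prod_tent {x : mixedSpace K} (hx : ∀ w, normAtPlace w x ≠ 0) :
    bump K x = ∏ k, tent (logCoord K (fun w => Real.log (normAtPlace w x)) k) := by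
  have hproj : logMap x = logProj K fun w => Real.log (normAtPlace w x) := by
    ext w
    rw [logProj_apply, ← log_norm_eq_logSum hx, logMap]
  rw [bump_of_norm_ne_zero (mixedEmbedding.norm_ne_zero_iff.mpr hx), Fintype.prod_option,
    mul_comm, unitWeight, hproj, log_norm_eq_logSum hx]
  rfl

variable (K)

open Classical in
lemma exists_lipschitzWith_bump : ∃ κ T, LipschitzWith κ (bump K) ∧
    Function.support (bump K) ⊆ Metric.closedBall 0 T := by
  obtain ⟨κ, T, hκ, hT⟩ := exists_lipschitzWith_prod_tent (logCoord_injective (K := K))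
  refine exists_lipschitzWith_of_comp_log (fun x w => normAtPlace_nonneg w x)
    lipschitzWith_normAtPlace norm_le_norm_normAtPlace hκ hT (fun x => bump_eq_prod_tent)
    fun x w hw => bump_of_norm_eq_zero ?_
  exact mixedEmbedding.norm_eq_zero_iff.mpr ⟨w, hw⟩

open Classical in
lemma integral_bump_pos : 0 < ∫ x, bump K x := by
  obtain ⟨κ, T, hκ, hT⟩ := exists_lipschitzWith_bump K
  refine hκ.continuous.integral_pos_of_hasCompactSupport_nonneg_nonzero
    (.of_support_subset_isCompact (isCompact_closedBall 0 T) hT) bump_nonneg (x := 1) ?_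
  rw [bump_one]
  exact one_ne_zero

end Bump

section IdealSums

open NumberField NumberField.InfinitePlace NumberField.mixedEmbedding NumberField.Units
  NumberField.Units.dirichletUnitTheorem

open scoped nonZeroDivisors

lemma finite_norm_le {E : Type*} [NormedAddCommGroup E] [ProperSpace E] (Λ : Submodule ℤ E)
    [DiscreteTopology Λ] (r : ℝ) : {l : Λ | ‖(l : E)‖ ≤ r}.Finite := by
  have hclosed : IsClosed (Λ : Set E) := by
    have : DiscreteTopology Λ.toAddSubgroup := inferInstanceAs (DiscreteTopology Λ)
    exact AddSubgroup.isClosed_of_discrete (H := Λ.toAddSubgroup)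
  have hfinite := Metric.finite_isBounded_inter_isClosed (K := Metric.closedBall (0 : E) r)
    (s := (Λ : Set E)) ⟨inferInstanceAs (DiscreteTopology Λ)⟩ Metric.isBounded_closedBall hclosed
  refine Set.Finite.of_finite_image (hfinite.subset ?_) Subtype.val_injective.injOn
  rintro _ ⟨l, hl, rfl⟩
  exact ⟨mem_closedBall_zero_iff.2 hl, l.2⟩

lemma summable_inv_smul {E : Type*} [NormedAddCommGroup E] [NormedSpace ℝ E] [ProperSpace E]
    (Λ : Submodule ℤ E) [DiscreteTopology Λ] {F : E → ℝ} {T R : ℝ}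
    (hT : Function.support F ⊆ Metric.closedBall 0 T) (hR : 0 < R) :
    Summable fun l : Λ => F (R⁻¹ • (l : E)) :=
  summable_of_hasFiniteSupport <| (finite_norm_le Λ (R * T)).subset fun _ hl =>
    mem_closedBall_zero_iff.1 (support_comp_inv_smul_subset hT hR hl)

lemma tsum_generators {A : Type*} [CommRing A] [IsDomain A] {a : A} (ha : a ≠ 0)
    (g : A → ENNReal) :
    ∑' b : {b : A // Ideal.span {b} = Ideal.span {a}}, g b = ∑' u : Aˣ, g (u * a) := by
  let e : Aˣ → {b : A // Ideal.span {b} = Ideal.span {a}} := fun u =>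
    ⟨u * a, Ideal.span_singleton_eq_span_singleton.2 (associated_unit_mul_left a u u.isUnit)⟩
  have he : Function.Bijective e := by
    refine ⟨fun u v huv => Units.ext (mul_right_cancel₀ ha (congrArg Subtype.val huv)), ?_⟩
    rintro ⟨b, hb⟩
    obtain ⟨u, rfl⟩ := (Ideal.span_singleton_eq_span_singleton.1 hb).symm
    exact ⟨u, Subtype.ext (mul_comm _ _)⟩
  exact ((Equiv.ofBijective e he).tsum_eq fun b => g b).symm

lemma tsum_mem_ideal {A : Type*} [CommRing A] [IsDedekindDomain A] {J : Ideal A} (hJ : J ≠ 0)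
    {g : A → ENNReal} (hg : g 0 = 0) :
    ∑' a : J, g a = ∑' I : (Ideal A)⁰, ∑' a : {a : A // Ideal.span {a} = I * J}, g a := by
  let e : (Σ I : (Ideal A)⁰, {a : A // Ideal.span {a} = I * J}) → J := fun z =>
    ⟨z.2, (Ideal.span_singleton_le_iff_mem J).1 (z.2.2.trans_le Ideal.mul_le_right)⟩
  have he : Function.Injective e := by
    rintro ⟨⟨I, hI⟩, a, ha⟩ ⟨⟨I', hI'⟩, b, hb⟩ hab
    obtain rfl : a = b := congrArg Subtype.val hab
    obtain rfl : I = I' := mul_right_cancel₀ hJ (ha.symm.trans hb)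
    rfl
  have hrange : Function.support (fun a : J => g a) ⊆ range e := by
    rintro ⟨a, ha⟩ hga
    have ha0 : a ≠ 0 := fun h => hga (by simp only [h, hg])
    obtain ⟨I, hI⟩ := Ideal.dvd_iff_le.2 ((Ideal.span_singleton_le_iff_mem J).2 ha)
    have hI0 : I ≠ 0 := by
      rintro rfl
      rw [mul_zero, Ideal.zero_eq_bot, Ideal.span_singleton_eq_bot] at hI
      exact ha0 hI
    exact ⟨⟨⟨I, mem_nonZeroDivisors_iff_ne_zero.2 hI0⟩, a, hI.trans (mul_comm _ _)⟩, rfl⟩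
  rw [← he.tsum_eq hrange]
  exact ENNReal.tsum_sigma' _

variable {K : Type*} [Field K] [NumberField K]

lemma mem_idealLattice_mk0 (J : (Ideal (𝓞 K))⁰) (x : mixedSpace K) :
    x ∈ idealLattice K (FractionalIdeal.mk0 K J) ↔
      ∃ a ∈ (J : Ideal (𝓞 K)), mixedEmbedding K (a : K) = x := by
  simp only [mem_idealLattice, FractionalIdeal.coe_mk0, SetLike.mem_coe,
    FractionalIdeal.mem_coeIdeal]
  constructor
  · rintro ⟨_, ⟨a, ha, rfl⟩, rfl⟩
    exact ⟨a, ha, rfl⟩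
  · rintro ⟨a, ha, rfl⟩
    exact ⟨_, ⟨a, ha, rfl⟩, rfl⟩

lemma tsum_idealLattice_mk0 (J : (Ideal (𝓞 K))⁰) (g : mixedSpace K → ENNReal) :
    ∑' l : idealLattice K (FractionalIdeal.mk0 K J), g l =
      ∑' a : (J : Ideal (𝓞 K)), g (mixedEmbedding K ((a : 𝓞 K) : K)) := by
  let e : ↥(J : Ideal (𝓞 K)) → idealLattice K (FractionalIdeal.mk0 K J) := fun a =>
    ⟨mixedEmbedding K ((a : 𝓞 K) : K), (mem_idealLattice_mk0 J _).2 ⟨a, a.2, rfl⟩⟩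
  have he : Function.Bijective e := by
    refine ⟨fun a b hab => Subtype.ext <| RingOfIntegers.ext <|
      mixedEmbedding_injective K (congrArg Subtype.val hab), ?_⟩
    rintro ⟨x, hx⟩
    obtain ⟨a, ha, rfl⟩ := (mem_idealLattice_mk0 J x).1 hx
    exact ⟨⟨a, ha⟩, rfl⟩
  exact ((Equiv.ofBijective e he).tsum_eq fun l => g l).symm

lemma norm_mixedEmbedding_eq_absNorm (a : 𝓞 K) :
    mixedEmbedding.norm (mixedEmbedding K (a : K)) = Ideal.absNorm (Ideal.span {a}) := by
  rw [Ideal.absNorm_span_singleton, norm_eq_norm, Nat.cast_natAbs, ← Algebra.coe_norm_int]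
  push_cast
  rfl

lemma tsum_bump_generators {a : 𝓞 K} (ha : a ≠ 0) {R : ℝ} (hR : 0 < R) :
    ∑' b : {b : 𝓞 K // Ideal.span {b} = Ideal.span {a}},
      ENNReal.ofReal (bump K (R⁻¹ • mixedEmbedding K ((b : 𝓞 K) : K))) =
    torsionOrder K * ENNReal.ofReal (tent (Real.log
      ((Ideal.absNorm (Ideal.span {a}) : ℝ)⁻¹ * R ^ Module.finrank ℚ K))) := by
  have hnorm : mixedEmbedding.norm (mixedEmbedding K (a : K)) ≠ 0 := by
    rw [norm_mixedEmbedding_eq_absNorm, Nat.cast_ne_zero, Ne, Ideal.absNorm_eq_zero_iff,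
      Ideal.span_singleton_eq_bot]
    exact ha
  rw [tsum_generators ha fun b => ENNReal.ofReal (bump K (R⁻¹ • mixedEmbedding K (b : K))),
    ← tsum_unitWeight_smul hnorm, ← ENNReal.tsum_mul_right]
  refine tsum_congr fun u => ?_
  have hsmul : mixedEmbedding K (((u * a : 𝓞 K)) : K) = u • mixedEmbedding K (a : K) := by
    rw [unitSMul_smul, ← map_mul]
    rfl
  rw [hsmul, bump_inv_smul (by rwa [norm_unit_smul]) hR, norm_unit_smul,
    ENNReal.ofReal_mul (unitWeight_nonneg _), norm_mixedEmbedding_eq_absNorm]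

/-- The absolute norm of a nonzero ideal of `𝓞 K`, as a real number. -/
noncomputable def idealNorm (I : (Ideal (𝓞 K))⁰) : ℝ := Ideal.absNorm (I : Ideal (𝓞 K))

lemma one_le_idealNorm (I : (Ideal (𝓞 K))⁰) : 1 ≤ idealNorm I :=
  Nat.one_le_cast.2 (Ideal.absNorm_pos_of_nonZeroDivisors I)

lemma idealNorm_pos (I : (Ideal (𝓞 K))⁰) : 0 < idealNorm I :=
  one_pos.trans_le (one_le_idealNorm I)

lemma idealNorm_mul (I J : (Ideal (𝓞 K))⁰) : idealNorm (I * J) = idealNorm I * idealNorm J := by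
  simp only [idealNorm, Submonoid.coe_mul, map_mul, Nat.cast_mul]

open Classical in
lemma tsum_bump_idealLattice {C : ClassGroup (𝓞 K)} {J : (Ideal (𝓞 K))⁰}
    (hJ : ClassGroup.mk0 J = C⁻¹) {R x : ℝ} (hR : 0 < R)
    (hRx : R ^ Module.finrank ℚ K = x * idealNorm J) :
    ∑' l : idealLattice K (FractionalIdeal.mk0 K J),
      ENNReal.ofReal (bump K (R⁻¹ • (l : mixedSpace K))) =
    ∑' I : (Ideal (𝓞 K))⁰, if ClassGroup.mk0 I = C then
      (torsionOrder K : ENNReal) * ENNReal.ofReal (tent (Real.log ((idealNorm I)⁻¹ * x)))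
      else 0 := by
  have hzero : ENNReal.ofReal (bump K (R⁻¹ • mixedEmbedding K ((0 : 𝓞 K) : K))) = 0 := by
    rw [bump_of_norm_eq_zero (by simp), ENNReal.ofReal_zero]
  rw [tsum_idealLattice_mk0 J fun l => ENNReal.ofReal (bump K (R⁻¹ • l)),
    tsum_mem_ideal (nonZeroDivisors.coe_ne_zero J)
      (g := fun a => ENNReal.ofReal (bump K (R⁻¹ • mixedEmbedding K (a : K)))) hzero]
  refine tsum_congr fun I => ?_
  have hprincipal : ClassGroup.mk0 I = C ↔
      ((I * J : (Ideal (𝓞 K))⁰) : Ideal (𝓞 K)).IsPrincipal := by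
    rw [← ClassGroup.mk0_eq_one_iff (I * J).2, Subtype.coe_eta, map_mul, hJ, mul_inv_eq_one]
  split_ifs with hI
  · obtain ⟨a, ha⟩ := (hprincipal.1 hI).principal
    replace ha : (I : Ideal (𝓞 K)) * J = Ideal.span {a} := ha
    have ha0 : a ≠ 0 := by
      rintro rfl
      rw [Ideal.span_singleton_eq_bot.2 rfl] at ha
      exact nonZeroDivisors.coe_ne_zero (I * J) ha
    have hnorm : (Ideal.absNorm (Ideal.span {a}) : ℝ) = idealNorm I * idealNorm J := by
      rw [← ha, map_mul, Nat.cast_mul, idealNorm, idealNorm]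
    rw [ha, tsum_bump_generators ha0 hR, hRx, hnorm, mul_inv, mul_mul_mul_comm,
      inv_mul_cancel₀ (idealNorm_pos J).ne', mul_one]
  · have : IsEmpty {a : 𝓞 K // Ideal.span {a} = (I : Ideal (𝓞 K)) * J} :=
      ⟨fun a => hI (hprincipal.2 ⟨⟨a, a.2.symm⟩⟩)⟩
    exact tsum_empty

end IdealSums

section IdealCount

open NumberField NumberField.mixedEmbedding NumberField.Units

open scoped nonZeroDivisors

variable {K : Type*} [Field K] [NumberField K]

open Classical in
lemma sum_tsum_bump_idealLattice {J : ClassGroup (𝓞 K) → (Ideal (𝓞 K))⁰}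
    (hJ : ∀ C, ClassGroup.mk0 (J C) = C⁻¹) {R : ClassGroup (𝓞 K) → ℝ} {x : ℝ}
    (hR : ∀ C, 0 < R C) (hRx : ∀ C, R C ^ Module.finrank ℚ K = x * idealNorm (J C)) :
    ∑ C, ∑' l : idealLattice K (FractionalIdeal.mk0 K (J C)),
      ENNReal.ofReal (bump K ((R C)⁻¹ • (l : mixedSpace K))) =
    torsionOrder K * ∑' I : (Ideal (𝓞 K))⁰,
      ENNReal.ofReal (tent (Real.log ((idealNorm I)⁻¹ * x))) := by
  simp_rw [fun C => tsum_bump_idealLattice (hJ C) (hR C) (hRx C)]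
  rw [← Summable.tsum_finsetSum fun _ _ => ENNReal.summable, ← ENNReal.tsum_mul_left]
  simp only [Finset.sum_ite_eq, Finset.mem_univ, if_true]

open Classical in
lemma torsionOrder_mul_smoothCount_idealNorm {J : ClassGroup (𝓞 K) → (Ideal (𝓞 K))⁰}
    (hJ : ∀ C, ClassGroup.mk0 (J C) = C⁻¹) {R : ClassGroup (𝓞 K) → ℝ} {x : ℝ}
    (hR : ∀ C, 0 < R C) (hRx : ∀ C, R C ^ Module.finrank ℚ K = x * idealNorm (J C)) :
    torsionOrder K * smoothCount (idealNorm (K := K)) x =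
      ∑ C, ∑' l : idealLattice K (FractionalIdeal.mk0 K (J C)),
        bump K ((R C)⁻¹ • (l : mixedSpace K)) := by
  obtain ⟨-, T, -, hT⟩ := exists_lipschitzWith_bump K
  have hofReal (C) : ENNReal.ofReal (∑' l : idealLattice K (FractionalIdeal.mk0 K (J C)),
      bump K ((R C)⁻¹ • (l : mixedSpace K))) = _ :=
    ENNReal.ofReal_tsum_of_nonneg (fun _ => bump_nonneg _) (summable_inv_smul _ hT (hR C))
  have hsum := congrArg ENNReal.toReal (sum_tsum_bump_idealLattice hJ hR hRx)
  simp_rw [← hofReal] at hsum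
  rw [ENNReal.toReal_sum fun _ _ => ENNReal.ofReal_ne_top, ENNReal.toReal_mul,
    ENNReal.toReal_natCast, ENNReal.tsum_toReal_eq fun _ => ENNReal.ofReal_ne_top] at hsum
  simp_rw [ENNReal.toReal_ofReal (tent_nonneg _),
    ENNReal.toReal_ofReal (tsum_nonneg fun _ => bump_nonneg _)] at hsum
  exact hsum.symm

variable (K)

open Classical in
lemma exists_abs_tsum_bump_sub_le (J : (Ideal (𝓞 K))⁰) :
    ∃ v E : ℝ, 0 < v ∧ ∀ R x : ℝ, 1 ≤ R → R ^ Module.finrank ℚ K = x →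
      |∑' l : idealLattice K (FractionalIdeal.mk0 K J), bump K (R⁻¹ • (l : mixedSpace K)) - v * x|
        ≤ E * (x / R) := by
  obtain ⟨κ, T, hκ, hT⟩ := exists_lipschitzWith_bump K
  obtain ⟨E, hE⟩ := exists_abs_tsum_inv_smul_sub_le (idealLattice K (FractionalIdeal.mk0 K J)) hκ
    (le_max_right T 0) (hT.trans (Metric.closedBall_subset_closedBall (le_max_left T 0)))
    (volume : Measure (mixedSpace K))
  refine ⟨_, E, div_pos (integral_bump_pos K)
    (ZLattice.covolume_pos (idealLattice K (FractionalIdeal.mk0 K J)) volume), ?_⟩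
  rintro R _ hR rfl
  simpa only [mixedEmbedding.finrank K, mul_comm] using hE R hR

lemma exists_abs_smoothCount_idealNorm_sub_le : ∃ c C : ℝ, 0 < c ∧ ∀ x, 1 ≤ x →
    |smoothCount (idealNorm (K := K)) x - c * x| ≤ C * x ^ (1 - (Module.finrank ℚ K : ℝ)⁻¹) := by
  classical
  choose J hJ using fun C : ClassGroup (𝓞 K) => ClassGroup.mk0_surjective C⁻¹
  choose v E hv hE using fun C => exists_abs_tsum_bump_sub_le K (J C)
  have htorsion : (0 : ℝ) < torsionOrder K := Nat.cast_pos.2 (torsionOrder_pos K)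
  refine ⟨(∑ C, v C * idealNorm (J C)) / torsionOrder K,
    (∑ C, E C * idealNorm (J C) ^ (1 - (Module.finrank ℚ K : ℝ)⁻¹)) / torsionOrder K,
    div_pos (Finset.sum_pos (fun C _ => mul_pos (hv C) (idealNorm_pos _)) ⟨1, Finset.mem_univ _⟩)
      htorsion, fun x hx => ?_⟩
  have hx0 : 0 < x := one_pos.trans_le hx
  have hpos (C) : 0 < x * idealNorm (J C) := mul_pos hx0 (idealNorm_pos _)
  let R : ClassGroup (𝓞 K) → ℝ := fun C => (x * idealNorm (J C)) ^ (Module.finrank ℚ K : ℝ)⁻¹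
  have hR1 (C) : 1 ≤ R C :=
    Real.one_le_rpow (one_le_mul_of_one_le_of_one_le hx (one_le_idealNorm _)) (by positivity)
  have hRpow (C) : R C ^ Module.finrank ℚ K = x * idealNorm (J C) :=
    Real.rpow_inv_natCast_pow (hpos C).le Module.finrank_pos.ne'
  have hclass (C) : |∑' l : idealLattice K (FractionalIdeal.mk0 K (J C)),
      bump K ((R C)⁻¹ • (l : mixedSpace K)) - v C * idealNorm (J C) * x| ≤
        E C * idealNorm (J C) ^ (1 - (Module.finrank ℚ K : ℝ)⁻¹) *
          x ^ (1 - (Module.finrank ℚ K : ℝ)⁻¹) := by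
    rw [mul_assoc (E C), ← Real.mul_rpow (idealNorm_pos _).le hx0.le, mul_assoc (v C),
      mul_comm (idealNorm _) x, Real.rpow_sub (hpos C), Real.rpow_one]
    exact hE C (R C) _ (hR1 C) (hRpow C)
  have hcount := torsionOrder_mul_smoothCount_idealNorm hJ (fun C => one_pos.trans_le (hR1 C)) hRpow
  rw [mul_comm, ← eq_div_iff htorsion.ne'] at hcount
  rw [hcount, div_mul_eq_mul_div, ← sub_div, abs_div, abs_of_pos htorsion, div_mul_eq_mul_div,
    Finset.sum_mul, Finset.sum_mul, ← Finset.sum_sub_distrib]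
  gcongr
  exact (Finset.abs_sum_le_sum_abs _ _).trans (Finset.sum_le_sum fun C _ => hclass C)

end IdealCount

section Summability

lemma summable_rpow_neg_of_card_le {ι : Type*} {N : ι → ℝ} (hN : ∀ i, 1 ≤ N i) {C : ℝ}
    (hfin : ∀ k : ℕ, {i | N i ≤ 2 ^ k}.Finite)
    (hcard : ∀ k : ℕ, ({i | N i ≤ 2 ^ k}.ncard : ℝ) ≤ C * 2 ^ k) {σ : ℝ} (hσ : 1 < σ) :
    Summable fun i => N i ^ (-σ) := by
  have hpos (i) : 0 ≤ N i ^ (-σ) := Real.rpow_nonneg (zero_le_one.trans (hN i)) _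
  have hC : 0 ≤ C := by simpa using (Nat.cast_nonneg _).trans (hcard 0)
  suffices h : ∑' i, ENNReal.ofReal (N i ^ (-σ)) ≠ ⊤ by
    simpa only [ENNReal.toReal_ofReal (hpos _)] using ENNReal.summable_toReal h
  have hdyadic (i) : ENNReal.ofReal (N i ^ (-σ)) ≤ ∑' k : ℕ, {i | N i ≤ 2 ^ (k + 1)}.indicator
      (fun _ => ENNReal.ofReal ((2 ^ k : ℝ) ^ (-σ))) i := by
    obtain ⟨k, hk, hk'⟩ := exists_nat_pow_near (hN i) (one_lt_two (α := ℝ))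
    refine le_trans ?_ (ENNReal.le_tsum k)
    rw [indicator_of_mem (by exact hk'.le)]
    exact ENNReal.ofReal_le_ofReal (Real.rpow_le_rpow_of_nonpos (by positivity) hk (by linarith))
  have hlevel (k : ℕ) : ∑' i, {i | N i ≤ 2 ^ (k + 1)}.indicator
      (fun _ => ENNReal.ofReal ((2 ^ k : ℝ) ^ (-σ))) i ≤
        ENNReal.ofReal (2 * C * ((2 : ℝ) ^ (1 - σ)) ^ k) := by
    have hpow : ((2 : ℝ) ^ (1 - σ)) ^ k = 2 ^ k * (2 ^ k : ℝ) ^ (-σ) := by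
      rw [Real.rpow_pow_comm two_pos.le, sub_eq_add_neg, Real.rpow_add (by positivity),
        Real.rpow_one]
    rw [← tsum_subtype, ENNReal.tsum_set_const, ← (hfin (k + 1)).cast_ncard_eq,
      ENat.toENNReal_coe, ← ENNReal.ofReal_natCast, ← ENNReal.ofReal_mul (by positivity)]
    refine ENNReal.ofReal_le_ofReal ?_
    calc ({i | N i ≤ 2 ^ (k + 1)}.ncard : ℝ) * (2 ^ k : ℝ) ^ (-σ)
        ≤ C * 2 ^ (k + 1) * (2 ^ k : ℝ) ^ (-σ) := by gcongr; exact hcard _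
      _ = 2 * C * ((2 : ℝ) ^ (1 - σ)) ^ k := by rw [hpow]; ring
  have hgeom : Summable fun k : ℕ => 2 * C * ((2 : ℝ) ^ (1 - σ)) ^ k :=
    (summable_geometric_of_lt_one (by positivity)
      (Real.rpow_lt_one_of_one_lt_of_neg one_lt_two (by linarith))).mul_left _
  refine ne_top_of_le_ne_top ?_ (ENNReal.tsum_le_tsum hdyadic)
  rw [ENNReal.tsum_comm]
  refine ne_top_of_le_ne_top ?_ (ENNReal.tsum_le_tsum hlevel)
  rw [← ENNReal.ofReal_tsum_of_nonneg (fun k => by positivity) hgeom]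
  exact ENNReal.ofReal_ne_top

end Summability

section Continuation

open NumberField

open scoped nonZeroDivisors

variable (K : Type*) [Field K] [NumberField K]

lemma finite_idealNorm_le (x : ℝ) : {I : (Ideal (𝓞 K))⁰ | idealNorm I ≤ x}.Finite :=
  (Ideal.finite_setOfPred_absNorm_le₀ (S := 𝓞 K) ⌊x⌋₊).subset fun _ hI => Nat.le_floor hI

instance : Countable (Ideal (𝓞 K))⁰ := by
  have hcover : ⋃ n : ℕ, {I : (Ideal (𝓞 K))⁰ | idealNorm I ≤ n} = univ :=
    eq_univ_of_forall fun I => mem_iUnion.2 ⟨Ideal.absNorm (I : Ideal (𝓞 K)), le_refl (idealNorm I)⟩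
  rw [← countable_univ_iff, ← hcover]
  exact countable_iUnion fun n => (finite_idealNorm_le K n).countable

lemma exists_ncard_idealNorm_le : ∃ C : ℝ, ∀ k : ℕ,
    ({I : (Ideal (𝓞 K))⁰ | idealNorm I ≤ 2 ^ k}.ncard : ℝ) ≤ C * 2 ^ k := by
  obtain ⟨C, hC⟩ := ((NumberField.Ideal.tendsto_norm_le_div_atTop₀ K).comp
    (tendsto_pow_atTop_atTop_of_one_lt (one_lt_two (α := ℝ)))).bddAbove_range
  exact ⟨C, fun k => (div_le_iff₀ (by positivity)).1 (hC ⟨k, rfl⟩)⟩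

lemma summable_idealNorm_rpow_neg {σ : ℝ} (hσ : 1 < σ) :
    Summable fun I : (Ideal (𝓞 K))⁰ => idealNorm I ^ (-σ) := by
  obtain ⟨C, hC⟩ := exists_ncard_idealNorm_le K
  exact summable_rpow_neg_of_card_le one_le_idealNorm (fun k => finite_idealNorm_le K (2 ^ k)) hC hσ

lemma exists_differentiableOn_eq_sub_one_mul_tsum_idealNorm : ∃ δ : ℝ, δ < 1 ∧ ∃ W : ℂ → ℂ,
    DifferentiableOn ℂ W {s | δ < s.re} ∧ W 1 ≠ 0 ∧
      ∀ s : ℂ, 1 < s.re → W s = (s - 1) * ∑' I : (Ideal (𝓞 K))⁰, (idealNorm I : ℂ) ^ (-s) := by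
  obtain ⟨c, C, hc, hcount⟩ := exists_abs_smoothCount_idealNorm_sub_le K
  have hdegree : (1 : ℝ) ≤ Module.finrank ℚ K := Nat.one_le_cast.2 Module.finrank_pos
  have hδ : 1 - (Module.finrank ℚ K : ℝ)⁻¹ < 1 := sub_lt_self _ (by positivity)
  exact ⟨_, hδ, exists_differentiableOn_eq_sub_one_mul_tsum one_le_idealNorm
    (fun _ => summable_idealNorm_rpow_neg K) hc.ne'
    (sub_nonneg.2 (inv_le_one_of_one_le₀ hdegree)) hδ hcount⟩

end Continuation

section Dirichlet

lemma norm_ofReal_cpow_neg {x : ℝ} (hx : 0 < x) (s : ℂ) : ‖(x : ℂ) ^ (-s)‖ = x ^ (-s.re) := by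
  rw [Complex.norm_cpow_eq_rpow_re_of_pos hx, Complex.neg_re]

lemma hasDerivAt_ofReal_cpow_neg {x : ℝ} (hx : 0 < x) (s : ℂ) :
    HasDerivAt (fun s : ℂ => (x : ℂ) ^ (-s)) (-(Real.log x * (x : ℂ) ^ (-s))) s := by
  convert (hasDerivAt_neg s).const_cpow (c := (x : ℂ)) (Or.inl (Complex.ofReal_ne_zero.2 hx.ne'))
    using 1
  rw [Complex.ofReal_log hx.le]
  ring

variable {ι : Type*} {N : ι → ℝ}

lemma summable_cpow_neg (hN : ∀ i, 0 < N i)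
    (hsum : ∀ σ : ℝ, 1 < σ → Summable fun i => N i ^ (-σ)) {s : ℂ} (hs : 1 < s.re) :
    Summable fun i => (N i : ℂ) ^ (-s) :=
  .of_norm <| by simpa only [norm_ofReal_cpow_neg (hN _)] using hsum s.re hs

lemma summable_log_mul_rpow_neg (hN : ∀ i, 1 ≤ N i)
    (hsum : ∀ σ : ℝ, 1 < σ → Summable fun i => N i ^ (-σ)) {σ : ℝ} (hσ : 1 < σ) :
    Summable fun i => Real.log (N i) * N i ^ (-σ) := by
  have hpos (i) : 0 < N i := one_pos.trans_le (hN i)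
  have hε : 0 < (σ - 1) / 2 := by linarith
  refine .of_nonneg_of_le
    (fun i => mul_nonneg (Real.log_nonneg (hN i)) (Real.rpow_nonneg (hpos i).le _)) (fun i => ?_)
    ((hsum ((σ + 1) / 2) (by linarith)).mul_left ((σ - 1) / 2)⁻¹)
  calc Real.log (N i) * N i ^ (-σ)
      ≤ N i ^ ((σ - 1) / 2) / ((σ - 1) / 2) * N i ^ (-σ) :=
        mul_le_mul_of_nonneg_right (Real.log_le_rpow_div (hpos i).le hε)
          (Real.rpow_nonneg (hpos i).le _)
    _ = ((σ - 1) / 2)⁻¹ * N i ^ (-((σ + 1) / 2)) := by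
        rw [show -((σ + 1) / 2) = (σ - 1) / 2 + -σ by ring, Real.rpow_add (hpos i)]
        ring

lemma hasDerivAt_tsum_cpow_neg (hN : ∀ i, 1 ≤ N i)
    (hsum : ∀ σ : ℝ, 1 < σ → Summable fun i => N i ^ (-σ)) {s : ℂ} (hs : 1 < s.re) :
    HasDerivAt (fun s : ℂ => ∑' i, (N i : ℂ) ^ (-s))
      (-∑' i, Real.log (N i) * (N i : ℂ) ^ (-s)) s := by
  obtain ⟨σ, hσ, hσs⟩ := exists_between hs
  have hpos (i) : 0 < N i := one_pos.trans_le (hN i)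
  have hopen : IsOpen {w : ℂ | σ < w.re} := isOpen_lt continuous_const Complex.continuous_re
  have hdiff (i) : DifferentiableOn ℂ (fun w : ℂ => (N i : ℂ) ^ (-w)) {w : ℂ | σ < w.re} :=
    fun w _ => (hasDerivAt_ofReal_cpow_neg (hpos i) w).differentiableAt.differentiableWithinAt
  have hle (i) (w : ℂ) (hw : w ∈ {w : ℂ | σ < w.re}) : ‖(N i : ℂ) ^ (-w)‖ ≤ N i ^ (-σ) := by
    rw [norm_ofReal_cpow_neg (hpos i)]
    exact Real.rpow_le_rpow_of_exponent_le (hN i) (neg_le_neg hw.le)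
  have hderiv := Complex.hasSum_deriv_of_summable_norm (hsum σ hσ) hdiff hopen hle hσs
  simp_rw [fun i => (hasDerivAt_ofReal_cpow_neg (hpos i) s).deriv] at hderiv
  rw [← tsum_neg, hderiv.tsum_eq]
  exact ((Complex.differentiableOn_tsum_of_summable_norm (hsum σ hσ) hdiff hopen hle
    ).differentiableAt (hopen.mem_nhds hσs)).hasDerivAt

lemma tsum_prod_nat_eq_add {α E : Type*} [NormedAddCommGroup E] [CompleteSpace E] {f : α × ℕ → E}
    (hf : Summable f) : ∑' q, f q = ∑' a, f (a, 0) + ∑' q : α × ℕ, f (q.1, q.2 + 1) := by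
  have hzero : Summable fun a => f (a, 0) := hf.comp_injective (Prod.mk_left_injective 0)
  have hsucc : Summable fun q : α × ℕ => f (q.1, q.2 + 1) :=
    hf.comp_injective (Function.injective_id.prodMap Nat.succ_injective)
  rw [hf.tsum_prod, hsucc.tsum_prod, ← hzero.tsum_add hsucc.prod]
  exact tsum_congr fun a => (hf.prod_factor a).tsum_eq_zero_add

end Dirichlet

section PrimePowers

open NumberField IsDedekindDomain

open scoped nonZeroDivisors

variable {K : Type*} [Field K] [NumberField K]

/-- The absolute norm of a nonzero prime ideal, as a real number. -/
noncomputable def primeNorm (P : HeightOneSpectrum (𝓞 K)) : ℝ := Ideal.absNorm P.asIdeal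

/-- The prime power `P ^ (k + 1)` attached to a pair `(P, k)`; the shift makes this a bijection
onto the nontrivial prime powers. -/
noncomputable def primePow (q : HeightOneSpectrum (𝓞 K) × ℕ) : (Ideal (𝓞 K))⁰ :=
  ⟨q.1.asIdeal ^ (q.2 + 1), mem_nonZeroDivisors_iff_ne_zero.2 (pow_ne_zero _ q.1.ne_bot)⟩

open Classical in
/-- The exponent of the prime `P` in the factorization of the ideal `I`. -/
noncomputable def primeExponent (I : (Ideal (𝓞 K))⁰) (P : HeightOneSpectrum (𝓞 K)) : ℕ :=
  (Associates.mk P.asIdeal).count (Associates.mk (I : Ideal (𝓞 K))).factors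

lemma two_le_primeNorm (P : HeightOneSpectrum (𝓞 K)) : 2 ≤ primeNorm P := by
  have h0 : Ideal.absNorm P.asIdeal ≠ 0 := Ideal.absNorm_eq_zero_iff.not.2 P.ne_bot
  have h1 : Ideal.absNorm P.asIdeal ≠ 1 := Ideal.absNorm_eq_one_iff.not.2 P.isPrime.ne_top
  exact Nat.ofNat_le_cast.2 (by omega)

lemma primeNorm_pos (P : HeightOneSpectrum (𝓞 K)) : 0 < primeNorm P :=
  two_pos.trans_le (two_le_primeNorm P)

lemma log_primeNorm_nonneg (P : HeightOneSpectrum (𝓞 K)) : 0 ≤ Real.log (primeNorm P) :=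
  Real.log_nonneg (one_le_two.trans (two_le_primeNorm P))

lemma idealNorm_primePow (P : HeightOneSpectrum (𝓞 K)) (k : ℕ) :
    idealNorm (primePow (P, k)) = primeNorm P ^ (k + 1) := by
  simp only [idealNorm, primePow, primeNorm, map_pow, Nat.cast_pow]

lemma primeNorm_le_idealNorm_primePow (q : HeightOneSpectrum (𝓞 K) × ℕ) :
    primeNorm q.1 ≤ idealNorm (primePow q) := by
  rw [idealNorm_primePow]
  exact le_self_pow₀ (one_le_two.trans (two_le_primeNorm q.1)) q.2.succ_ne_zero

lemma primePow_injective : Function.Injective (primePow (K := K)) := by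
  rintro ⟨P, k⟩ ⟨Q, m⟩ hpow
  have hpow' : P.asIdeal ^ (k + 1) = Q.asIdeal ^ (m + 1) := congrArg Subtype.val hpow
  have hdvd : P.asIdeal ∣ Q.asIdeal :=
    P.prime.dvd_of_dvd_pow ((dvd_pow_self _ k.succ_ne_zero).trans hpow'.dvd)
  obtain rfl : P = Q := HeightOneSpectrum.ext
    (Q.isMaximal.eq_of_le P.isPrime.ne_top (Ideal.dvd_iff_le.1 hdvd)).symm
  have hnorm := congrArg idealNorm hpow
  rw [idealNorm_primePow, idealNorm_primePow, pow_right_inj₀ (primeNorm_pos P)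
    (one_lt_two.trans_le (two_le_primeNorm P)).ne', add_left_inj] at hnorm
  rw [hnorm]

lemma primePow_mul_injective : Function.Injective
    fun x : (Ideal (𝓞 K))⁰ × (HeightOneSpectrum (𝓞 K) × ℕ) => (primePow x.2 * x.1, x.2) := by
  rintro ⟨I, q⟩ ⟨I', q'⟩ h
  simp only [Prod.mk.injEq] at h
  obtain ⟨hmul, rfl⟩ := h
  have hI : I = I' := Subtype.ext <|
    mul_left_cancel₀ (nonZeroDivisors.coe_ne_zero (primePow q)) (congrArg Subtype.val hmul)
  rw [hI]

lemma primePow_dvd_iff (I : (Ideal (𝓞 K))⁰) (P : HeightOneSpectrum (𝓞 K)) (k : ℕ) :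
    primePow (P, k) ∣ I ↔ k < primeExponent I P := by
  classical
  have hI : (I : Ideal (𝓞 K)) ≠ 0 := nonZeroDivisors.coe_ne_zero I
  rw [primeExponent, ← Nat.succ_le_iff, ← Associates.prime_pow_dvd_iff_le
    (Associates.mk_ne_zero.2 hI) (Associates.irreducible_mk.2 P.irreducible), ← Associates.mk_pow,
    Associates.mk_le_mk_iff_dvd]
  refine ⟨fun ⟨J, hJ⟩ => ⟨J, congrArg Subtype.val hJ⟩, fun ⟨J, hJ⟩ => ?_⟩
  have hJ0 : J ≠ 0 := right_ne_zero_of_mul (hJ ▸ hI)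
  exact ⟨⟨J, mem_nonZeroDivisors_iff_ne_zero.2 hJ0⟩, Subtype.ext hJ⟩

lemma hasSum_primeExponent_mul_log (I : (Ideal (𝓞 K))⁰) :
    HasSum (fun P : HeightOneSpectrum (𝓞 K) => primeExponent I P * Real.log (primeNorm P))
      (Real.log (idealNorm I)) := by
  classical
  have hI : (I : Ideal (𝓞 K)) ≠ 0 := nonZeroDivisors.coe_ne_zero I
  have hfinite := Ideal.finite_factors hI
  have hzero {P} (hP : P ∉ hfinite.toFinset) : primeExponent I P = 0 := by
    by_contra h
    exact hP (hfinite.mem_toFinset.2 ((Associates.count_ne_zero_iff_dvd hI P.irreducible).1 h))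
  have hprod : idealNorm I = ∏ P ∈ hfinite.toFinset, primeNorm P ^ primeExponent I P := by
    have hfactor := Ideal.finprod_heightOneSpectrum_factorization hI
    rw [finprod_eq_prod_of_mulSupport_subset (s := hfinite.toFinset) _ fun P hP => ?_] at hfactor
    · have hnorm := congrArg Ideal.absNorm hfactor
      rw [map_prod] at hnorm
      rw [idealNorm, ← hnorm, Nat.cast_prod]
      exact Finset.prod_congr rfl fun P _ => by
        rw [HeightOneSpectrum.maxPowDividing, map_pow, Nat.cast_pow, primeNorm, primeExponent]
    · by_contra h
      exact hP ((congrArg (P.asIdeal ^ ·) (hzero h)).trans (pow_zero _))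
  rw [hprod, Real.log_prod fun P _ => pow_ne_zero _ (primeNorm_pos P).ne']
  simp_rw [Real.log_pow]
  exact hasSum_sum_of_ne_finset_zero fun P hP => by rw [hzero hP, Nat.cast_zero, zero_mul]

open Classical in
lemma hasSum_log_primeNorm_of_dvd (I : (Ideal (𝓞 K))⁰) :
    HasSum (fun q : HeightOneSpectrum (𝓞 K) × ℕ =>
      if primePow q ∣ I then Real.log (primeNorm q.1) else 0) (Real.log (idealNorm I)) := by
  have hsummable : Summable fun q : HeightOneSpectrum (𝓞 K) × ℕ =>
      if primePow q ∣ I then Real.log (primeNorm q.1) else 0 := by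
    refine summable_of_hasFiniteSupport <| ((finite_idealNorm_le K (idealNorm I)).preimage
      primePow_injective.injOn).subset fun q hq => ?_
    obtain ⟨J, rfl⟩ : primePow q ∣ I := by
      by_contra h
      exact hq (if_neg h)
    rw [mem_preimage, mem_ofPred_eq, idealNorm_mul]
    exact le_mul_of_one_le_right (idealNorm_pos _).le (one_le_idealNorm _)
  have hfiber (P : HeightOneSpectrum (𝓞 K)) : HasSum
      (fun k : ℕ => if primePow (P, k) ∣ I then Real.log (primeNorm P) else 0)
      (primeExponent I P * Real.log (primeNorm P)) := by
    simp_rw [primePow_dvd_iff, ← Finset.mem_range]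
    have hsum : HasSum (fun k => if k ∈ Finset.range (primeExponent I P) then
        Real.log (primeNorm P) else 0) _ := hasSum_sum_of_ne_finset_zero fun k hk => if_neg hk
    rwa [Finset.sum_ite_mem, Finset.inter_self, Finset.sum_const, Finset.card_range,
      nsmul_eq_mul] at hsum
  have hsum := hsummable.hasSum
  rwa [(hsum.prod_fiberwise hfiber).unique (hasSum_primeExponent_mul_log I)] at hsum

end PrimePowers

section DedekindZeta

open NumberField IsDedekindDomain

open scoped nonZeroDivisors

variable (K : Type*) [Field K] [NumberField K]

/-- The Dedekind zeta function as a sum over ideals, meaningful for `1 < s.re`. -/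
noncomputable def idealZeta (s : ℂ) : ℂ := ∑' I : (Ideal (𝓞 K))⁰, (idealNorm I : ℂ) ^ (-s)

/-- The Dirichlet series `∑ Λ(I) N(I)⁻ˢ` of the von Mangoldt function of `K`, summed over the prime
powers; it represents `-ζ_K'/ζ_K` for `1 < s.re`. -/
noncomputable def vonMangoldtSeries (s : ℂ) : ℂ :=
  ∑' q : HeightOneSpectrum (𝓞 K) × ℕ,
    (Real.log (primeNorm q.1) : ℂ) * (idealNorm (primePow q) : ℂ) ^ (-s)

lemma summable_log_mul_idealNorm_primePow {σ : ℝ} (hσ : 1 < σ) :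
    Summable fun q : HeightOneSpectrum (𝓞 K) × ℕ =>
      Real.log (primeNorm q.1) * idealNorm (primePow q) ^ (-σ) :=
  .of_nonneg_of_le
    (fun _ => mul_nonneg (log_primeNorm_nonneg _) (Real.rpow_nonneg (idealNorm_pos _).le _))
    (fun q => mul_le_mul_of_nonneg_right
      (Real.log_le_log (primeNorm_pos _) (primeNorm_le_idealNorm_primePow q))
      (Real.rpow_nonneg (idealNorm_pos _).le _))
    ((summable_log_mul_rpow_neg one_le_idealNorm
      (fun _ => summable_idealNorm_rpow_neg K) hσ).comp_injective primePow_injective)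

lemma summable_norm_vonMangoldtSeries {s : ℂ} (hs : 1 < s.re) :
    Summable fun q : HeightOneSpectrum (𝓞 K) × ℕ =>
      ‖(Real.log (primeNorm q.1) : ℂ) * (idealNorm (primePow q) : ℂ) ^ (-s)‖ := by
  simpa only [norm_mul, Complex.norm_real, norm_ofReal_cpow_neg (idealNorm_pos _),
    Real.norm_of_nonneg (log_primeNorm_nonneg _)] using summable_log_mul_idealNorm_primePow K hs

open Classical in
lemma hasSum_primePow_dvd {s : ℂ} (hs : 1 < s.re) :
    HasSum (fun x : (Ideal (𝓞 K))⁰ × (HeightOneSpectrum (𝓞 K) × ℕ) =>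
      ((if primePow x.2 ∣ x.1 then Real.log (primeNorm x.2.1) else 0 : ℝ) : ℂ) *
        (idealNorm x.1 : ℂ) ^ (-s)) (idealZeta K s * vonMangoldtSeries K s) := by
  have hzeta := summable_cpow_neg (N := idealNorm (K := K)) idealNorm_pos
    (fun _ => summable_idealNorm_rpow_neg K) hs
  have hmangoldt := summable_norm_vonMangoldtSeries K hs
  have hprod := summable_mul_of_summable_norm hzeta.norm hmangoldt
  rw [idealZeta, vonMangoldtSeries, hzeta.tsum_mul_tsum hmangoldt.of_norm hprod]
  refine (primePow_mul_injective.hasSum_iff fun x hx => ?_).1 (hprod.hasSum.congr_fun ?_)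
  · rw [if_neg, Complex.ofReal_zero, zero_mul]
    rintro ⟨J, hJ⟩
    exact hx ⟨(J, x.2), Prod.ext hJ.symm rfl⟩
  · rintro ⟨I, q⟩
    rw [Function.comp_apply, if_pos (dvd_mul_right (primePow q) I), idealNorm_mul,
      Complex.ofReal_mul,
      Complex.mul_cpow_ofReal_nonneg (idealNorm_pos _).le (idealNorm_pos _).le]
    ring

lemma hasSum_log_mul_idealNorm {s : ℂ} (hs : 1 < s.re) :
    HasSum (fun I : (Ideal (𝓞 K))⁰ => (Real.log (idealNorm I) : ℂ) * (idealNorm I : ℂ) ^ (-s))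
      (idealZeta K s * vonMangoldtSeries K s) := by
  classical
  refine (hasSum_primePow_dvd K hs).prod_fiberwise fun I => ?_
  dsimp only
  exact (Complex.hasSum_ofReal.2 (hasSum_log_primeNorm_of_dvd I)).mul_right _

lemma hasDerivAt_idealZeta {s : ℂ} (hs : 1 < s.re) :
    HasDerivAt (idealZeta K) (-(idealZeta K s * vonMangoldtSeries K s)) s := by
  rw [← (hasSum_log_mul_idealNorm K hs).tsum_eq]
  exact hasDerivAt_tsum_cpow_neg one_le_idealNorm (fun _ => summable_idealNorm_rpow_neg K) hs

end DedekindZeta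

section LogDeriv

lemma exists_tendsto_sub_mul_logDeriv {f : ℂ → ℂ} {z₀ : ℂ} (hf : AnalyticAt ℂ f z₀)
    (hf0 : ¬ ∀ᶠ z in 𝓝 z₀, f z = 0) :
    ∃ n : ℕ, (n = 0 ↔ f z₀ ≠ 0) ∧
      Tendsto (fun z => (z - z₀) * logDeriv f z) (𝓝[≠] z₀) (𝓝 n) := by
  obtain ⟨n, g, hg, hg0, hfg⟩ := hf.exists_eventuallyEq_pow_smul_nonzero_iff.2 hf0
  simp_rw [smul_eq_mul] at hfg
  refine ⟨n, ?_, ?_⟩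
  · rw [hfg.self_of_nhds, sub_self, mul_ne_zero_iff_right hg0, Ne, pow_eq_zero_iff',
      not_and_not_right, forall_prop_of_true rfl]
  have hlim : Tendsto (fun z => n + (z - z₀) * (deriv g z / g z)) (𝓝 z₀)
      (𝓝 (n + (z₀ - z₀) * (deriv g z₀ / g z₀))) :=
    tendsto_const_nhds.add ((tendsto_id.sub_const z₀).mul
      (hg.deriv.continuousAt.div hg.continuousAt hg0))
  rw [sub_self, zero_mul, add_zero] at hlim
  refine (hlim.mono_left nhdsWithin_le_nhds).congr' ?_
  filter_upwards [eventually_nhdsWithin_of_eventually_nhds (logDeriv_congr_nhds hfg),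
    eventually_nhdsWithin_of_eventually_nhds (hg.continuousAt.eventually_ne hg0),
    eventually_nhdsWithin_of_eventually_nhds hg.eventually_analyticAt,
    self_mem_nhdsWithin] with z hz hgz hgan hne
  have hsub : z - z₀ ≠ 0 := sub_ne_zero.2 hne
  rw [hz, logDeriv_mul (f := fun w => (w - z₀) ^ n) z (pow_ne_zero n hsub) hgz (by fun_prop)
    hgan.differentiableAt,
    logDeriv_fun_pow (by fun_prop), logDeriv_apply, logDeriv_apply, deriv_sub_const, deriv_id'',
    mul_add, mul_left_comm, mul_one_div_cancel hsub, mul_one]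

lemma tendsto_add_ofReal_nhdsNE (z : ℂ) :
    Tendsto (fun ε : ℝ => z + ε) (𝓝[>] 0) (𝓝[≠] z) := by
  refine tendsto_nhdsWithin_iff.2 ⟨?_, ?_⟩
  · have hcont : ContinuousAt (fun ε : ℝ => z + (ε : ℂ)) 0 := by fun_prop
    simpa only [Complex.ofReal_zero, add_zero] using hcont.tendsto.mono_left nhdsWithin_le_nhds
  · filter_upwards [self_mem_nhdsWithin] with ε hε
    simpa using (mem_Ioi.1 hε).ne'

lemma tendsto_ofReal_mul_inv_add_sub_one {z : ℂ} (hz : z ≠ 1) :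
    Tendsto (fun ε : ℝ => (ε : ℂ) * (z + ε - 1)⁻¹) (𝓝[>] 0) (𝓝 0) := by
  have hne : z + ((0 : ℝ) : ℂ) - 1 ≠ 0 := by simpa [sub_eq_zero] using hz
  have hcont : ContinuousAt (fun ε : ℝ => (ε : ℂ) * (z + ε - 1)⁻¹) 0 := by
    fun_prop (disch := assumption)
  simpa only [Complex.ofReal_zero, zero_mul] using hcont.tendsto.mono_left nhdsWithin_le_nhds

end LogDeriv

section Nonvanishing

open NumberField IsDedekindDomain

open scoped nonZeroDivisors

variable (K : Type*) [Field K] [NumberField K]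

lemma norm_vonMangoldtSeries_le {s : ℂ} {σ : ℝ} (hσ : 1 < σ) (hs : σ ≤ s.re) :
    ‖vonMangoldtSeries K s‖ ≤ ∑' q : HeightOneSpectrum (𝓞 K) × ℕ,
      Real.log (primeNorm q.1) * idealNorm (primePow q) ^ (-σ) := by
  have hsummable := summable_norm_vonMangoldtSeries K (hσ.trans_le hs)
  refine (norm_tsum_le_tsum_norm hsummable).trans
    (hsummable.tsum_le_tsum (fun q => ?_) (summable_log_mul_idealNorm_primePow K hσ))
  rw [norm_mul, norm_ofReal_cpow_neg (idealNorm_pos _), Complex.norm_real,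
    Real.norm_of_nonneg (log_primeNorm_nonneg _)]
  exact mul_le_mul_of_nonneg_left
    (Real.rpow_le_rpow_of_exponent_le (one_le_idealNorm _) (neg_le_neg hs)) (log_primeNorm_nonneg _)

lemma re_ofReal_cpow_neg_add_mul_I {N : ℝ} (hN : 0 < N) (σ t : ℝ) :
    ((N : ℂ) ^ (-(σ + t * Complex.I))).re = N ^ (-σ) * Real.cos (t * Real.log N) := by
  have hN0 : (N : ℂ) ≠ 0 := Complex.ofReal_ne_zero.2 hN.ne'
  have hexp : (Real.log N : ℂ) * -(t * Complex.I) =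
      ((-(t * Real.log N) : ℝ) : ℂ) * Complex.I := by
    push_cast
    ring
  rw [neg_add, Complex.cpow_add _ _ hN0, ← Complex.ofReal_neg, ← Complex.ofReal_cpow hN.le,
    Complex.re_ofReal_mul, Complex.cpow_def_of_ne_zero hN0, ← Complex.ofReal_log hN.le, hexp,
    Complex.exp_ofReal_mul_I_re, Real.cos_neg]

lemma hasSum_re_vonMangoldtSeries {σ : ℝ} (hσ : 1 < σ) (t : ℝ) :
    HasSum (fun q : HeightOneSpectrum (𝓞 K) × ℕ => Real.log (primeNorm q.1) *
      (idealNorm (primePow q) ^ (-σ) * Real.cos (t * Real.log (idealNorm (primePow q)))))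
      (vonMangoldtSeries K (σ + t * Complex.I)).re := by
  have hre : 1 < ((σ : ℂ) + t * Complex.I).re := by simpa using hσ
  have hsum := Complex.hasSum_re (summable_norm_vonMangoldtSeries K hre).of_norm.hasSum
  simpa only [vonMangoldtSeries, Complex.re_ofReal_mul, re_ofReal_cpow_neg_add_mul_I
    (idealNorm_pos _)] using hsum

lemma vonMangoldtSeries_re_nonneg {σ : ℝ} (hσ : 1 < σ) (t : ℝ) :
    0 ≤ 3 * (vonMangoldtSeries K σ).re + 4 * (vonMangoldtSeries K (σ + t * Complex.I)).re +
      (vonMangoldtSeries K (σ + 2 * t * Complex.I)).re := by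
  have hsum := (((hasSum_re_vonMangoldtSeries K hσ 0).mul_left 3).add
    ((hasSum_re_vonMangoldtSeries K hσ t).mul_left 4)).add
      (hasSum_re_vonMangoldtSeries K hσ (2 * t))
  push_cast at hsum
  rw [zero_mul, add_zero] at hsum
  refine hsum.nonneg fun q => ?_
  rw [mul_assoc 2 t, Real.cos_two_mul, zero_mul, Real.cos_zero]
  have hlog := log_primeNorm_nonneg q.1
  have hpow : 0 ≤ idealNorm (primePow q) ^ (-σ) := Real.rpow_nonneg (idealNorm_pos _).le _
  -- `3 + 4 cos θ + cos 2θ = 2 (1 + cos θ)²`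
  calc (0 : ℝ) ≤ Real.log (primeNorm q.1) * idealNorm (primePow q) ^ (-σ) *
        (2 * (1 + Real.cos (t * Real.log (idealNorm (primePow q)))) ^ 2) := by positivity
    _ = _ := by ring

/-- `W` is an analytic extension of `(s - 1) ζ_K(s)` to the closed half-plane `1 ≤ s.re` which does
not vanish at `1`; in other words, `ζ_K` has a simple pole at `1` and no other pole on the line
`s.re = 1`. -/
structure IsZetaExtension (W : ℂ → ℂ) : Prop where
  analyticOnNhd : AnalyticOnNhd ℂ W {s | 1 ≤ s.re}
  one_ne_zero : W 1 ≠ 0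
  eq_sub_one_mul_idealZeta : ∀ s : ℂ, 1 < s.re → W s = (s - 1) * idealZeta K s

lemma exists_isZetaExtension : ∃ W, IsZetaExtension K W := by
  obtain ⟨δ, hδ, W, hW, hW1, hWζ⟩ := exists_differentiableOn_eq_sub_one_mul_tsum_idealNorm K
  have hopen : IsOpen {s : ℂ | δ < s.re} := isOpen_lt continuous_const Complex.continuous_re
  exact ⟨W, (hW.analyticOnNhd hopen).mono fun s hs => hδ.trans_le hs, hW1, hWζ⟩

namespace IsZetaExtension

variable {K} {W : ℂ → ℂ}

lemma deriv_eq_mul_sub_vonMangoldtSeries (hW : IsZetaExtension K W) {s : ℂ} (hs : 1 < s.re) :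
    deriv W s = W s * ((s - 1)⁻¹ - vonMangoldtSeries K s) := by
  have hopen : IsOpen {w : ℂ | 1 < w.re} := isOpen_lt continuous_const Complex.continuous_re
  have hWζ : W =ᶠ[𝓝 s] fun s => (s - 1) * idealZeta K s :=
    eventually_of_mem (hopen.mem_nhds hs) hW.eq_sub_one_mul_idealZeta
  have hderiv := ((hasDerivAt_id s).sub_const 1).mul (hasDerivAt_idealZeta K hs)
  have hs1 := sub_one_ne_zero_of_one_lt_re hs
  rw [hWζ.deriv_eq, hW.eq_sub_one_mul_idealZeta s hs]
  refine hderiv.deriv.trans ?_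
  simp only [id_eq]
  field_simp
  ring

lemma exists_tendsto_mul_inv_sub_vonMangoldtSeries (hW : IsZetaExtension K W) {z : ℂ}
    (hz : 1 ≤ z.re) :
    ∃ n : ℕ, (n = 0 ↔ W z ≠ 0) ∧
      Tendsto (fun ε : ℝ => (ε : ℂ) * ((z + ε - 1)⁻¹ - vonMangoldtSeries K (z + ε)))
        (𝓝[>] 0) (𝓝 n) := by
  have hconn : IsPreconnected {s : ℂ | 1 ≤ s.re} := (convex_halfSpace_re_ge 1).isPreconnected
  have hW0 : ¬ ∀ᶠ w in 𝓝 z, W w = 0 := fun h =>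
    hW.one_ne_zero (hW.analyticOnNhd.eqOn_zero_of_preconnected_of_eventuallyEq_zero hconn hz h
      Complex.one_re.ge)
  obtain ⟨n, hn, hlim⟩ := exists_tendsto_sub_mul_logDeriv (hW.analyticOnNhd z hz) hW0
  have hne := (hW.analyticOnNhd z hz).eventually_eq_zero_or_eventually_ne_zero.resolve_left hW0
  refine ⟨n, hn, (hlim.comp (tendsto_add_ofReal_nhdsNE z)).congr' ?_⟩
  filter_upwards [self_mem_nhdsWithin, (tendsto_add_ofReal_nhdsNE z).eventually hne] with ε hε hWε
  have hre : 1 < (z + ε).re := by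
    rw [Complex.add_re, Complex.ofReal_re]
    linarith [mem_Ioi.1 hε]
  rw [Function.comp_apply, add_sub_cancel_left, logDeriv_apply,
    hW.deriv_eq_mul_sub_vonMangoldtSeries hre, mul_div_cancel_left₀ _ hWε]

lemma exists_tendsto_mul_vonMangoldtSeries (hW : IsZetaExtension K W) {z : ℂ} (hz : 1 ≤ z.re)
    (hz1 : z ≠ 1) :
    ∃ n : ℕ, (n = 0 ↔ W z ≠ 0) ∧
      Tendsto (fun ε : ℝ => (ε : ℂ) * vonMangoldtSeries K (z + ε)) (𝓝[>] 0) (𝓝 (-n)) := by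
  obtain ⟨n, hn, hlim⟩ := hW.exists_tendsto_mul_inv_sub_vonMangoldtSeries hz
  refine ⟨n, hn, ?_⟩
  simpa only [mul_sub, sub_sub_cancel, zero_sub] using
    (tendsto_ofReal_mul_inv_add_sub_one hz1).sub hlim

lemma tendsto_mul_vonMangoldtSeries_one (hW : IsZetaExtension K W) :
    Tendsto (fun ε : ℝ => (ε : ℂ) * vonMangoldtSeries K (1 + ε)) (𝓝[>] 0) (𝓝 1) := by
  obtain ⟨n, hn, hlim⟩ := hW.exists_tendsto_mul_inv_sub_vonMangoldtSeries Complex.one_re.ge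
  rw [hn.2 hW.one_ne_zero, Nat.cast_zero] at hlim
  have hsub := (tendsto_const_nhds (x := (1 : ℂ))).sub hlim
  rw [sub_zero] at hsub
  refine hsub.congr' ?_
  filter_upwards [self_mem_nhdsWithin] with ε hε
  have hε0 : (ε : ℂ) ≠ 0 := Complex.ofReal_ne_zero.2 (mem_Ioi.1 hε).ne'
  rw [add_sub_cancel_left, mul_sub, mul_inv_cancel₀ hε0, sub_sub_cancel]

lemma ne_zero_of_one_lt_re (hW : IsZetaExtension K W) {s : ℂ} (hs : 1 < s.re) : W s ≠ 0 := by
  have hs1 : s ≠ 1 := sub_ne_zero.1 (sub_one_ne_zero_of_one_lt_re hs)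
  obtain ⟨n, hn, hlim⟩ := hW.exists_tendsto_mul_vonMangoldtSeries hs.le hs1
  have hzero : Tendsto (fun ε : ℝ => (ε : ℂ) * vonMangoldtSeries K (s + ε)) (𝓝[>] 0) (𝓝 0) := by
    have hε : Tendsto (fun ε : ℝ => (ε : ℂ)) (𝓝[>] 0) (𝓝 0) :=
      (Complex.continuous_ofReal.tendsto' 0 0 Complex.ofReal_zero).mono_left nhdsWithin_le_nhds
    refine hε.zero_mul_isBoundedUnder_le (isBoundedUnder_of_eventually_le
      (a := ∑' q : HeightOneSpectrum (𝓞 K) × ℕ,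
        Real.log (primeNorm q.1) * idealNorm (primePow q) ^ (-s.re)) ?_)
    filter_upwards [self_mem_nhdsWithin] with ε hε
    refine norm_vonMangoldtSeries_le K hs ?_
    rw [Complex.add_re, Complex.ofReal_re]
    exact le_add_of_nonneg_right (mem_Ioi.1 hε).le
  exact hn.1 (Nat.cast_eq_zero.1 (neg_eq_zero.1 (tendsto_nhds_unique hlim hzero)))

lemma ne_zero_one_add_mul_I (hW : IsZetaExtension K W) {t : ℝ} (ht : t ≠ 0) :
    W (1 + t * Complex.I) ≠ 0 := by
  have hre (u : ℝ) : 1 ≤ (1 + u * Complex.I).re := by simp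
  have hne {u : ℝ} (hu : u ≠ 0) : 1 + u * Complex.I ≠ 1 := by simpa using hu
  obtain ⟨n, hn, hlim⟩ := hW.exists_tendsto_mul_vonMangoldtSeries (hre t) (hne ht)
  obtain ⟨m, -, hlim'⟩ := hW.exists_tendsto_mul_vonMangoldtSeries (hre (2 * t))
    (hne (mul_ne_zero two_ne_zero ht))
  have hre_lim {z c : ℂ} (h : Tendsto (fun ε : ℝ => (ε : ℂ) * vonMangoldtSeries K (z + ε))
      (𝓝[>] 0) (𝓝 c)) :
      Tendsto (fun ε : ℝ => ε * (vonMangoldtSeries K (z + ε)).re) (𝓝[>] 0) (𝓝 c.re) := by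
    simpa only [Function.comp_def, Complex.re_ofReal_mul] using
      (Complex.continuous_re.tendsto c).comp h
  have hnonneg : (0 : ℝ) ≤ 3 * 1 + 4 * -n + -m := by
    refine ge_of_tendsto ((((hre_lim (hW.tendsto_mul_vonMangoldtSeries_one)).const_mul
      3).add ((hre_lim hlim).const_mul 4)).add (hre_lim hlim')) ?_
    filter_upwards [self_mem_nhdsWithin] with ε hε
    have h341 := vonMangoldtSeries_re_nonneg K (lt_add_of_pos_right 1 (mem_Ioi.1 hε)) t
    push_cast at h341 ⊢
    rw [add_right_comm 1 (ε : ℂ), add_right_comm 1 (ε : ℂ)] at h341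
    exact (mul_nonneg (mem_Ioi.1 hε).le h341).trans_eq (by ring)
  refine hn.1 (Nat.lt_one_iff.1 (Nat.cast_lt (α := ℝ).1 ?_))
  rw [Nat.cast_one]
  linarith [Nat.cast_nonneg (α := ℝ) m]

theorem ne_zero_of_one_le_re (hW : IsZetaExtension K W) {s : ℂ} (hs : 1 ≤ s.re) : W s ≠ 0 := by
  rcases hs.lt_or_eq with hlt | heq
  · exact hW.ne_zero_of_one_lt_re hlt
  have hs' : s = 1 + s.im * Complex.I := by
    rw [← Complex.re_add_im s, ← heq]
    simp
  rw [hs']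
  rcases eq_or_ne s.im 0 with him | him
  · simpa [him] using hW.one_ne_zero
  · exact hW.ne_zero_one_add_mul_I him

end IsZetaExtension

end Nonvanishing

section Laplace

variable {ι : Type*} [Countable ι] {a : ι → ℝ} {c : ι → ℂ} {s : ℂ}

lemma setIntegral_Ioi_indicator_Ici {E : Type*} [NormedAddCommGroup E] [NormedSpace ℝ E] {a b : ℝ}
    (hab : a < b) (f : ℝ → E) :
    ∫ v in Ioi a, (Ici b).indicator f v = ∫ v in Ioi b, f v := by
  rw [setIntegral_indicator measurableSet_Ici,
    inter_eq_self_of_subset_right (Ici_subset_Ioi.2 hab), integral_Ici_eq_integral_Ioi]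

lemma integral_tsum_indicator_Ici_mul_exp (ha : ∀ i, 0 < a i) (hs : 0 < s.re)
    (hsum : Summable fun i => ‖c i‖ * Real.exp (-s.re * a i)) :
    ∫ v in Ioi (0 : ℝ), (∑' i, (Ici (a i)).indicator (fun _ => c i) v) * Complex.exp (-s * v) =
      (∑' i, c i * Complex.exp (-s * a i)) / s := by
  have hre : (-s).re < 0 := neg_neg_of_pos hs
  let F (i : ι) : ℝ → ℂ := (Ici (a i)).indicator fun v => c i * Complex.exp (-s * v)
  have hF (i : ι) : Integrable (F i) (volume.restrict (Ioi 0)) := by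
    have hexp : IntegrableOn (fun v : ℝ => c i * Complex.exp (-s * v)) (Ici (a i)) := by
      rw [integrableOn_Ici_iff_integrableOn_Ioi]
      exact (integrableOn_exp_mul_complex_Ioi hre (a i)).const_mul (c i)
    exact (hexp.integrable_indicator measurableSet_Ici).integrableOn
  have hintegral (i : ι) : ∫ v in Ioi (0 : ℝ), F i v = c i * Complex.exp (-s * a i) / s := by
    rw [setIntegral_Ioi_indicator_Ici (ha i), integral_const_mul, integral_exp_mul_complex_Ioi hre,
      neg_div_neg_eq, mul_div_assoc]
  have hnorm (i : ι) : ∫ v in Ioi (0 : ℝ), ‖F i v‖ = ‖c i‖ * Real.exp (-s.re * a i) / s.re := by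
    simp_rw [F, norm_indicator_eq_indicator_norm]
    rw [setIntegral_Ioi_indicator_Ici (ha i)]
    simp_rw [norm_mul, Complex.norm_exp, Complex.re_mul_ofReal, Complex.neg_re]
    rw [integral_const_mul, integral_exp_mul_Ioi (neg_neg_of_pos hs), neg_div_neg_eq, mul_div_assoc]
  have hsumF := hasSum_integral_of_summable_integral_norm hF
    ((hsum.div_const s.re).congr fun i => (hnorm i).symm)
  simp_rw [hintegral] at hsumF
  rw [← tsum_div_const, hsumF.tsum_eq]
  refine integral_congr_ae (Eventually.of_forall fun v => ?_)
  dsimp only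
  rw [← tsum_mul_right]
  exact tsum_congr fun i => 
    (indicator_mul_left (Ici (a i)) (fun _ => c i) fun v : ℝ => Complex.exp (-s * v)).symm

end Laplace

section Theta

open NumberField IsDedekindDomain

open scoped nonZeroDivisors

variable (K : Type*) [Field K] [NumberField K]

instance : Countable (HeightOneSpectrum (𝓞 K)) :=
  (primePow_injective.comp (Prod.mk_left_injective 0)).countable

lemma finite_primeNorm_le (x : ℝ) : {P : HeightOneSpectrum (𝓞 K) | primeNorm P ≤ x}.Finite := by
  refine ((finite_idealNorm_le K x).preimage
    (primePow_injective.comp (Prod.mk_left_injective 0)).injOn).subset fun P hP => ?_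
  simpa only [mem_preimage, mem_ofPred_eq, Function.comp_apply, idealNorm_primePow, zero_add,
    pow_one] using hP

/-- The Chebyshev function `ϑ_K(x) = ∑ log N(P)`, summed over the primes `P` with `N(P) ≤ x`. -/
noncomputable def theta (x : ℝ) : ℝ :=
  ∑ P ∈ (finite_primeNorm_le K x).toFinset, Real.log (primeNorm P)

lemma theta_mono : Monotone (theta K) := fun _ _ hxy =>
  Finset.sum_le_sum_of_subset_of_nonneg
    (Finite.toFinset_subset_toFinset.2 fun _ hP => le_trans hP hxy) fun P _ _ =>
      log_primeNorm_nonneg P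

lemma theta_nonneg (x : ℝ) : 0 ≤ theta K x := Finset.sum_nonneg fun P _ => log_primeNorm_nonneg P

variable {K} in
lemma primorial_mem_of_primeNorm_le {P : HeightOneSpectrum (𝓞 K)} {x : ℝ} (hP : primeNorm P ≤ x) :
    (primorial ⌊x⌋₊ : 𝓞 K) ∈ P.asIdeal := by
  have : P.asIdeal.IsPrime := P.isPrime
  have : NeZero P.asIdeal := ⟨P.ne_bot⟩
  set p := Ideal.absNorm (P.asIdeal.under ℤ)
  have hp : p.Prime := Nat.absNorm_under_prime P.asIdeal
  have hpx : p ≤ ⌊x⌋₊ := Nat.le_floor <| le_trans (Nat.cast_le.2 <| Nat.le_of_dvd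
    (Nat.cast_pos.1 (primeNorm_pos P)) (Int.absNorm_under_dvd_absNorm P.asIdeal)) hP
  have hdvd : p ∣ primorial ⌊x⌋₊ := Finset.dvd_prod_of_mem (fun p => p)
    (Finset.mem_filter.2 ⟨Finset.mem_range_succ_iff.2 hpx, hp⟩)
  exact Ideal.mem_of_dvd _ (Nat.cast_dvd_cast hdvd) (Int.absNorm_under_mem P.asIdeal)

lemma prod_primeNorm_le_primorial_pow (x : ℝ) :
    ∏ P ∈ (finite_primeNorm_le K x).toFinset, primeNorm P ≤
      (primorial ⌊x⌋₊ : ℝ) ^ Module.finrank ℚ K := by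
  classical
  set S := (finite_primeNorm_le K x).toFinset
  have hinj : Function.Injective fun P : HeightOneSpectrum (𝓞 K) => P.asIdeal := fun _ _ =>
    HeightOneSpectrum.ext
  have hdvd : ∏ P ∈ S, P.asIdeal ∣ Ideal.span {(primorial ⌊x⌋₊ : 𝓞 K)} := by
    rw [← Finset.prod_image (f := fun I => I) hinj.injOn]
    refine Finset.prod_primes_dvd _ (Finset.forall_mem_image.2 fun P _ => P.prime)
      (Finset.forall_mem_image.2 fun P hP => ?_)
    exact Ideal.dvd_span_singleton.2
      (primorial_mem_of_primeNorm_le ((finite_primeNorm_le K x).mem_toFinset.1 hP))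
  have hnorm := Ideal.absNorm_dvd_absNorm_of_le (Ideal.dvd_iff_le.1 hdvd)
  rw [Ideal.absNorm_span_natCast, RingOfIntegers.rank, map_prod] at hnorm
  have hle := Nat.le_of_dvd (pow_pos (primorial_pos _) _) hnorm
  simpa only [primeNorm, Nat.cast_prod, Nat.cast_pow] using Nat.cast_le (α := ℝ).2 hle

lemma theta_le {x : ℝ} (hx : 0 ≤ x) : theta K x ≤ Module.finrank ℚ K * Real.log 4 * x := by
  calc theta K x = Real.log (∏ P ∈ (finite_primeNorm_le K x).toFinset, primeNorm P) :=
        (Real.log_prod fun P _ => (primeNorm_pos P).ne').symm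
    _ ≤ Real.log ((primorial ⌊x⌋₊ : ℝ) ^ Module.finrank ℚ K) :=
        Real.log_le_log (Finset.prod_pos fun P _ => primeNorm_pos P)
          (prod_primeNorm_le_primorial_pow K x)
    _ = Module.finrank ℚ K * Chebyshev.theta x := by
        rw [Real.log_pow, Chebyshev.theta_eq_log_primorial]
    _ ≤ Module.finrank ℚ K * Real.log 4 * x := by
        rw [mul_assoc]
        exact mul_le_mul_of_nonneg_left (Chebyshev.theta_le_log4_mul_x hx) (Nat.cast_nonneg _)

/-- The part `∑ log N(P) N(P)⁻ˢ` of the von Mangoldt series coming from the primes themselves. -/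
noncomputable def logPrimeSeries (s : ℂ) : ℂ :=
  ∑' P : HeightOneSpectrum (𝓞 K), (Real.log (primeNorm P) : ℂ) * (primeNorm P : ℂ) ^ (-s)

/-- The part of the von Mangoldt series coming from the prime powers with exponent at least `2`. -/
noncomputable def higherPrimePowSeries (s : ℂ) : ℂ :=
  ∑' q : HeightOneSpectrum (𝓞 K) × ℕ,
    (Real.log (primeNorm q.1) : ℂ) * (idealNorm (primePow (q.1, q.2 + 1)) : ℂ) ^ (-s)

lemma summable_log_mul_primeNorm {σ : ℝ} (hσ : 1 < σ) :
    Summable fun P : HeightOneSpectrum (𝓞 K) => Real.log (primeNorm P) * primeNorm P ^ (-σ) := by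
  refine ((summable_log_mul_idealNorm_primePow K hσ).comp_injective
    (Prod.mk_left_injective 0)).congr fun P => ?_
  simp only [Function.comp_apply, idealNorm_primePow, zero_add, pow_one]

variable {K} in
lemma idealNorm_primePow_rpow_neg_le {σ : ℝ} (hσ : 1 ≤ σ) (P : HeightOneSpectrum (𝓞 K)) (k : ℕ) :
    idealNorm (primePow (P, k + 1)) ^ (-σ) ≤ primeNorm P ^ (-2 : ℝ) * (1 / 2) ^ k := by
  have hP := primeNorm_pos P
  calc idealNorm (primePow (P, k + 1)) ^ (-σ) ≤ idealNorm (primePow (P, k + 1)) ^ (-1 : ℝ) :=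
        Real.rpow_le_rpow_of_exponent_le (one_le_idealNorm _) (neg_le_neg hσ)
    _ = primeNorm P ^ (-2 : ℝ) * (1 / primeNorm P) ^ k := by
        rw [Real.rpow_neg_one, idealNorm_primePow, Real.rpow_neg hP.le, Real.rpow_two, one_div,
          inv_pow, ← mul_inv, ← pow_add]
        ring_nf
    _ ≤ primeNorm P ^ (-2 : ℝ) * (1 / 2) ^ k := by
        gcongr
        exact two_le_primeNorm P

lemma continuousOn_higherPrimePowSeries :
    ContinuousOn (higherPrimePowSeries K) {s | 1 ≤ s.re} := by
  have hsum : Summable fun q : HeightOneSpectrum (𝓞 K) × ℕ =>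
      Real.log (primeNorm q.1) * primeNorm q.1 ^ (-2 : ℝ) * (1 / 2) ^ q.2 :=
    (summable_log_mul_primeNorm K one_lt_two).mul_of_nonneg summable_geometric_two
      (fun P => mul_nonneg (log_primeNorm_nonneg P) (Real.rpow_nonneg (primeNorm_pos P).le _))
      fun k => by positivity
  refine continuousOn_tsum (fun q => Continuous.continuousOn ?_) hsum fun q s hs => ?_
  · have hne : (idealNorm (primePow (q.1, q.2 + 1)) : ℂ) ≠ 0 :=
      Complex.ofReal_ne_zero.2 (idealNorm_pos _).ne'
    exact continuous_const.mul (continuous_neg.const_cpow (Or.inl hne))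
  · rw [norm_mul, norm_ofReal_cpow_neg (idealNorm_pos _), Complex.norm_real,
      Real.norm_of_nonneg (log_primeNorm_nonneg _), mul_assoc]
    exact mul_le_mul_of_nonneg_left (idealNorm_primePow_rpow_neg_le hs q.1 q.2)
      (log_primeNorm_nonneg _)

lemma vonMangoldtSeries_eq_add {s : ℂ} (hs : 1 < s.re) :
    vonMangoldtSeries K s = logPrimeSeries K s + higherPrimePowSeries K s := by
  rw [vonMangoldtSeries, tsum_prod_nat_eq_add (summable_norm_vonMangoldtSeries K hs).of_norm,
    logPrimeSeries, higherPrimePowSeries]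
  simp_rw [idealNorm_primePow, zero_add, pow_one]

theorem exists_continuousOn_eq_logPrimeSeries_sub_inv : ∃ h : ℂ → ℂ,
    ContinuousOn h {s | 1 ≤ s.re} ∧ ∀ s, 1 < s.re → h s = logPrimeSeries K s - (s - 1)⁻¹ := by
  obtain ⟨W, hW⟩ := exists_isZetaExtension K
  refine ⟨fun s => -(deriv W s / W s) - higherPrimePowSeries K s, ?_, fun s hs => ?_⟩
  · exact ((hW.analyticOnNhd.deriv.continuousOn.div hW.analyticOnNhd.continuousOn
      fun s hs => hW.ne_zero_of_one_le_re hs).neg).sub (continuousOn_higherPrimePowSeries K)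
  · dsimp only
    rw [hW.deriv_eq_mul_sub_vonMangoldtSeries hs,
      mul_div_cancel_left₀ _ (hW.ne_zero_of_one_le_re hs.le), vonMangoldtSeries_eq_add K hs]
    ring

lemma theta_exp_eq_tsum (v : ℝ) : (theta K (Real.exp v) : ℂ) =
    ∑' P : HeightOneSpectrum (𝓞 K), (Ici (Real.log (primeNorm P))).indicator
      (fun _ => (Real.log (primeNorm P) : ℂ)) v := by
  have hmem (P : HeightOneSpectrum (𝓞 K)) : P ∈ (finite_primeNorm_le K (Real.exp v)).toFinset ↔
      v ∈ Ici (Real.log (primeNorm P)) := by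
    rw [Finite.mem_toFinset, mem_Ici, Real.log_le_iff_le_exp (primeNorm_pos P), mem_ofPred_eq]
  rw [tsum_eq_sum fun P hP => indicator_of_notMem (mt (hmem P).2 hP) _, theta, Complex.ofReal_sum]
  exact Finset.sum_congr rfl fun P hP => by rw [indicator_of_mem ((hmem P).1 hP)]

lemma integral_theta_exp_mul_exp {s : ℂ} (hs : 1 < s.re) :
    ∫ v in Ioi (0 : ℝ), (theta K (Real.exp v) : ℂ) * Complex.exp (-s * v) =
      logPrimeSeries K s / s := by
  have hlog (P : HeightOneSpectrum (𝓞 K)) : 0 < Real.log (primeNorm P) :=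
    Real.log_pos (one_lt_two.trans_le (two_le_primeNorm P))
  have hsum : Summable fun P : HeightOneSpectrum (𝓞 K) =>
      ‖(Real.log (primeNorm P) : ℂ)‖ * Real.exp (-s.re * Real.log (primeNorm P)) := by
    refine (summable_log_mul_primeNorm K hs).congr fun P => ?_
    rw [Complex.norm_real, Real.norm_of_nonneg (hlog P).le, Real.rpow_def_of_pos (primeNorm_pos P),
      mul_comm (-s.re)]
  simp_rw [theta_exp_eq_tsum]
  rw [integral_tsum_indicator_Ici_mul_exp hlog (zero_lt_one.trans hs) hsum, logPrimeSeries]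
  congr 1
  refine tsum_congr fun P => ?_
  rw [Complex.cpow_def_of_ne_zero (Complex.ofReal_ne_zero.2 (primeNorm_pos P).ne'),
    ← Complex.ofReal_log (primeNorm_pos P).le, mul_comm (-s)]

lemma theta_exp_mul_exp_neg_le (u : ℝ) :
    theta K (Real.exp u) * Real.exp (-u) ≤ Module.finrank ℚ K * Real.log 4 := by
  rw [Real.exp_neg, ← div_eq_mul_inv, div_le_iff₀ (Real.exp_pos u)]
  exact theta_le K (Real.exp_pos u).le

lemma integral_theta_exp_sub_one {s : ℂ} (hs : 0 < s.re) :
    ∫ v in Ioi (0 : ℝ), ((theta K (Real.exp v) * Real.exp (-v) - 1 : ℝ) : ℂ) *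
      Complex.exp (-s * v) = logPrimeSeries K (s + 1) / (s + 1) - s⁻¹ := by
  have hre : (-s).re < 0 := neg_neg_of_pos hs
  have hexp := integrableOn_exp_mul_complex_Ioi hre 0
  have hmeas : Measurable fun v : ℝ => theta K (Real.exp v) * Real.exp (-v) :=
    ((theta_mono K).comp Real.exp_monotone).measurable.mul (by fun_prop)
  have htheta : IntegrableOn (fun v : ℝ => ((theta K (Real.exp v) * Real.exp (-v) : ℝ) : ℂ) *
      Complex.exp (-s * v)) (Ioi 0) := by
    refine hexp.bdd_mul (c := Module.finrank ℚ K * Real.log 4)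
      (Complex.measurable_ofReal.comp hmeas).aestronglyMeasurable (Eventually.of_forall fun v => ?_)
    rw [Complex.norm_real, Real.norm_of_nonneg
      (mul_nonneg (theta_nonneg K _) (Real.exp_nonneg _))]
    exact theta_exp_mul_exp_neg_le K v
  have hshift (v : ℝ) : ((theta K (Real.exp v) * Real.exp (-v) : ℝ) : ℂ) * Complex.exp (-s * v) =
      theta K (Real.exp v) * Complex.exp (-(s + 1) * v) := by
    push_cast
    rw [mul_assoc, ← Complex.exp_add]
    ring_nf
  have hre1 : 1 < (s + 1).re := by
    rw [Complex.add_re, Complex.one_re]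
    exact lt_add_of_pos_left 1 hs
  simp_rw [Complex.ofReal_sub, Complex.ofReal_one, sub_mul, one_mul]
  rw [integral_sub htheta hexp, integral_exp_mul_complex_Ioi hre]
  simp_rw [hshift]
  rw [integral_theta_exp_mul_exp K hre1, Complex.ofReal_zero, mul_zero, Complex.exp_zero,
    neg_div_neg_eq, one_div]

theorem tendsto_theta_exp_mul_exp_neg :
    Tendsto (fun u : ℝ => theta K (Real.exp u) * Real.exp (-u)) atTop (𝓝 1) := by
  obtain ⟨h, hcont, hh⟩ := exists_continuousOn_eq_logPrimeSeries_sub_inv K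
  have hre {s : ℂ} (hs : 0 ≤ s.re) : 1 ≤ (s + 1).re := by simpa using hs
  have hne {s : ℂ} (hs : 0 ≤ s.re) : s + 1 ≠ 0 := fun h0 => by
    have := hre hs
    rw [h0, Complex.zero_re] at this
    exact absurd this zero_lt_one.not_ge
  refine wienerIkehara (A := fun u => theta K (Real.exp u))
    (H := fun s => (h (s + 1) - 1) / (s + 1)) ((theta_mono K).comp Real.exp_monotone)
    (fun u => theta_nonneg K _) (theta_exp_mul_exp_neg_le K) ?_ fun s hs => ?_
  · exact ((hcont.comp (by fun_prop) fun s => hre).sub continuousOn_const).div (by fun_prop)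
      fun s => hne
  · have hs0 : s ≠ 0 := Complex.ne_zero_of_re_pos hs
    have hs1 := hne hs.le
    have hre1 : 1 < (s + 1).re := by simpa using hs
    rw [integral_theta_exp_sub_one K hs, hh _ hre1, add_sub_cancel_right]
    field_simp
    ring

lemma tendsto_theta_div_id : Tendsto (fun x : ℝ => theta K x / x) atTop (𝓝 1) := by
  refine ((tendsto_theta_exp_mul_exp_neg K).comp Real.tendsto_log_atTop).congr' ?_
  filter_upwards [eventually_gt_atTop 0] with x hx
  rw [Function.comp_apply, Real.exp_neg, Real.exp_log hx, div_eq_mul_inv]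

end Theta

section LogIntegral

lemma integral_one_div_log_eq {x : ℝ} (hx : 2 ≤ x) :
    ∫ t in (2 : ℝ)..x, 1 / Real.log t =
      x / Real.log x - 2 / Real.log 2 + ∫ t in (2 : ℝ)..x, 1 / Real.log t ^ 2 := by
  have hne {t : ℝ} (ht : t ∈ uIcc 2 x) : t ≠ 0 ∧ Real.log t ≠ 0 := by
    rw [uIcc_of_le hx] at ht
    exact ⟨(two_pos.trans_le ht.1).ne', (Real.log_pos (one_lt_two.trans_le ht.1)).ne'⟩
  have hint : IntervalIntegrable (fun t => 1 / Real.log t) volume 2 x :=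
    (continuousOn_const.div (Real.continuousOn_log.mono fun t ht => (hne ht).1)
      fun t ht => (hne ht).2).intervalIntegrable
  have hint_sq := Chebyshev.intervalIntegrable_one_div_log_sq one_lt_two (one_lt_two.trans_le hx)
  have hderiv (t : ℝ) (ht : t ∈ uIcc 2 x) :
      HasDerivAt (fun t => t / Real.log t) (1 / Real.log t - 1 / Real.log t ^ 2) t := by
    obtain ⟨ht0, hlog⟩ := hne ht
    refine ((hasDerivAt_id' t).fun_div (Real.hasDerivAt_log ht0) hlog).congr_deriv ?_
    field_simp
  have hftc := intervalIntegral.integral_eq_sub_of_hasDerivAt hderiv (hint.sub hint_sq)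
  rw [intervalIntegral.integral_sub hint hint_sq] at hftc
  exact sub_eq_iff_eq_add.1 hftc

lemma tendsto_log_div_rpow {r : ℝ} (hr : 0 < r) :
    Tendsto (fun x : ℝ => Real.log x / x ^ r) atTop (𝓝 0) :=
  (isLittleO_log_rpow_atTop hr).tendsto_div_nhds_zero

lemma tendsto_integral_one_div_log_mul_log_div :
    Tendsto (fun x : ℝ => (∫ t in (2 : ℝ)..x, 1 / Real.log t) * Real.log x / x) atTop (𝓝 1) := by
  have hlog : Tendsto (fun x : ℝ => Real.log x / x) atTop (𝓝 0) := by
    simpa only [Real.rpow_one] using tendsto_log_div_rpow one_pos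
  have hsq : Tendsto (fun x : ℝ => (∫ t in (2 : ℝ)..x, 1 / Real.log t ^ 2) * (Real.log x / x))
      atTop (𝓝 0) := by
    refine (Chebyshev.integral_one_div_log_sq_isBigO.mul
      (Asymptotics.isBigO_refl _ _)).trans_tendsto
        (Real.tendsto_log_atTop.inv_tendsto_atTop.congr' ?_)
    filter_upwards [eventually_gt_atTop 1] with x hx
    have := Real.log_pos hx
    rw [Pi.inv_apply]
    field_simp
  have hlim := (hlog.const_mul (2 / Real.log 2)).const_sub 1 |>.add hsq
  rw [mul_zero, sub_zero, add_zero] at hlim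
  refine hlim.congr' ?_
  filter_upwards [eventually_ge_atTop 2] with x hx
  have hx0 : x ≠ 0 := (two_pos.trans_le hx).ne'
  have hlogx : Real.log x ≠ 0 := (Real.log_pos (one_lt_two.trans_le hx)).ne'
  rw [integral_one_div_log_eq hx]
  field_simp

end LogIntegral

section PrimeCounting

open NumberField IsDedekindDomain

variable (K : Type*) [Field K] [NumberField K]

/-- The prime counting function `π_K(x)`: the number of primes `P` of `K` with `N(P) ≤ x`. -/
noncomputable def primeIdealCount (x : ℝ) : ℕ := (finite_primeNorm_le K x).toFinset.card

lemma ncard_isPrime_absNorm_le (x : ℝ) :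
    {P : Ideal (𝓞 K) | P.IsPrime ∧ P ≠ ⊥ ∧ (Ideal.absNorm P : ℝ) ≤ x}.ncard =
      primeIdealCount K x := by
  have hinj : Function.Injective fun P : HeightOneSpectrum (𝓞 K) => P.asIdeal := fun _ _ =>
    HeightOneSpectrum.ext
  rw [primeIdealCount, ← ncard_eq_toFinset_card _ (finite_primeNorm_le K x),
    ← ncard_image_of_injective _ hinj]
  congr 1
  ext I
  constructor
  · rintro ⟨hprime, hne, hle⟩
    exact ⟨⟨I, hprime, hne⟩, hle, rfl⟩
  · rintro ⟨P, hP, rfl⟩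
    exact ⟨P.isPrime, P.ne_bot, hP⟩

lemma theta_le_primeIdealCount_mul_log (x : ℝ) :
    theta K x ≤ primeIdealCount K x * Real.log x := by
  rw [theta, primeIdealCount, ← nsmul_eq_mul]
  exact Finset.sum_le_card_nsmul _ _ _ fun P hP =>
    Real.log_le_log (primeNorm_pos P) ((finite_primeNorm_le K x).mem_toFinset.1 hP)

lemma primeIdealCount_mul_log_two_le_theta (x : ℝ) :
    primeIdealCount K x * Real.log 2 ≤ theta K x := by
  rw [theta, primeIdealCount, ← nsmul_eq_mul]
  exact Finset.card_nsmul_le_sum _ _ _ fun P _ => Real.log_le_log two_pos (two_le_primeNorm P)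

lemma primeIdealCount_le {x : ℝ} (hx : 0 ≤ x) :
    primeIdealCount K x ≤ Module.finrank ℚ K * Real.log 4 / Real.log 2 * x := by
  rw [div_mul_eq_mul_div, le_div_iff₀ (Real.log_pos one_lt_two)]
  exact (primeIdealCount_mul_log_two_le_theta K x).trans (theta_le K hx)

lemma primeIdealCount_sub_mul_log_le_theta {x y : ℝ} (hy : 0 < y) (hyx : y ≤ x) :
    (primeIdealCount K x - primeIdealCount K y) * Real.log y ≤ theta K x := by
  classical
  set S := (finite_primeNorm_le K x).toFinset
  set T := (finite_primeNorm_le K y).toFinset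
  have hsub : T ⊆ S := Finite.toFinset_subset_toFinset.2 fun P hP => le_trans hP hyx
  have hle : ∀ P ∈ S \ T, Real.log y ≤ Real.log (primeNorm P) := fun P hP => by
    have hPT : ¬ primeNorm P ≤ y :=
      mt (finite_primeNorm_le K y).mem_toFinset.2 (Finset.mem_sdiff.1 hP).2
    exact Real.log_le_log hy (le_of_not_ge hPT)
  calc (primeIdealCount K x - primeIdealCount K y) * Real.log y = (S \ T).card • Real.log y := by
        rw [nsmul_eq_mul, Finset.cast_card_sdiff hsub, primeIdealCount, primeIdealCount]
    _ ≤ ∑ P ∈ S \ T, Real.log (primeNorm P) := Finset.card_nsmul_le_sum _ _ _ hle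
    _ ≤ theta K x := Finset.sum_le_sum_of_subset_of_nonneg Finset.sdiff_subset
        fun P _ _ => log_primeNorm_nonneg P

lemma primeIdealCount_mul_log_div_le {α x : ℝ} (hα0 : 0 < α) (hα1 : α ≤ 1) (hx : 1 < x) :
    primeIdealCount K x * Real.log x / x ≤ α⁻¹ * (theta K x / x) +
      Module.finrank ℚ K * Real.log 4 / Real.log 2 * (Real.log x / x ^ (1 - α)) := by
  set D := Module.finrank ℚ K * Real.log 4 / Real.log 2
  have hx0 : 0 < x := zero_lt_one.trans hx
  have hlog : 0 < Real.log x := Real.log_pos hx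
  have hpow : 0 < x ^ α := Real.rpow_pos_of_pos hx0 α
  have hpow_le : x ^ α ≤ x := Real.rpow_le_self_of_one_le hx.le hα1
  have hlarge : (primeIdealCount K x - primeIdealCount K (x ^ α)) * Real.log x ≤
      α⁻¹ * theta K x := by
    have := primeIdealCount_sub_mul_log_le_theta K hpow hpow_le
    rw [Real.log_rpow hx0] at this
    rw [← div_eq_inv_mul, le_div_iff₀ hα0]
    linarith
  have hsmall : primeIdealCount K (x ^ α) * Real.log x ≤ D * x ^ α * Real.log x :=
    mul_le_mul_of_nonneg_right (primeIdealCount_le K hpow.le) hlog.le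
  calc primeIdealCount K x * Real.log x / x
      ≤ (α⁻¹ * theta K x + D * x ^ α * Real.log x) / x :=
        div_le_div_of_nonneg_right (by linarith) hx0.le
    _ = α⁻¹ * (theta K x / x) + D * (Real.log x / x ^ (1 - α)) := by
        rw [Real.rpow_sub hx0, Real.rpow_one]
        field_simp

theorem tendsto_primeIdealCount_mul_log_div :
    Tendsto (fun x : ℝ => primeIdealCount K x * Real.log x / x) atTop (𝓝 1) := by
  have htheta := tendsto_theta_div_id K
  refine tendsto_order.2 ⟨fun a ha => ?_, fun b hb => ?_⟩
  · filter_upwards [htheta.eventually_const_lt ha, eventually_gt_atTop 0] with x hx hx0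
    exact hx.trans_le
      (div_le_div_of_nonneg_right (theta_le_primeIdealCount_mul_log K x) hx0.le)
  · obtain ⟨c, hc1, hcb⟩ := exists_between hb
    have hc0 : 0 < c := zero_lt_one.trans hc1
    have hlim := (htheta.const_mul c).add ((tendsto_log_div_rpow
      (sub_pos.2 (inv_lt_one_of_one_lt₀ hc1))).const_mul
        (Module.finrank ℚ K * Real.log 4 / Real.log 2))
    rw [mul_one, mul_zero, add_zero] at hlim
    filter_upwards [hlim.eventually_lt_const hcb, eventually_gt_atTop 1] with x hx hx1
    refine lt_of_le_of_lt ?_ hx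
    simpa only [inv_inv] using
      primeIdealCount_mul_log_div_le K (inv_pos.2 hc0) (inv_le_one_of_one_le₀ hc1.le) hx1

end PrimeCounting

end PrimeIdealTheorem

/-- Prime ideal theorem: the number of nonzero prime ideals of `O_K` of norm at most
`x` is asymptotic to `Li(x)`. -/
theorem prime_ideal_theorem (K : Type*) [Field K] [NumberField K] :
    Tendsto (fun x : ℝ =>
        ({P : Ideal (NumberField.RingOfIntegers K) |
            P.IsPrime ∧ P ≠ ⊥ ∧ (Ideal.absNorm P : ℝ) ≤ x}.ncard : ℝ) /
          ∫ t in (2:ℝ)..x, 1 / Real.log t)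
      atTop (nhds 1) := by
  have hlim := (PrimeIdealTheorem.tendsto_primeIdealCount_mul_log_div K).div
    PrimeIdealTheorem.tendsto_integral_one_div_log_mul_log_div one_ne_zero
  rw [div_one] at hlim
  refine hlim.congr' ?_
  filter_upwards [eventually_gt_atTop 1] with x hx
  have hlog : Real.log x ≠ 0 := (Real.log_pos hx).ne'
  have hx0 : x ≠ 0 := (zero_lt_one.trans hx).ne'
  rw [PrimeIdealTheorem.ncard_isPrime_absNorm_le, Pi.div_apply, div_div_div_cancel_right₀ hx0,
    mul_div_mul_right _ _ hlog]
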